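/- arXiv:1011.4492 — 3 statements merged into one kernel-verified Lean document; each statement's English description precedes it below -/
import Mathlib

section
/- Suppose χ is a non-principal Dirichlet character modulo a prime p ≥ 10^7, u is a prime with u ≥ e²·log p, and H is a positive integer such that χ(n) = 1 for all integers n ∈ [1,H] with gcd(n,u) = 1. If H ≤ (2e²·log p − 2)^{1/2}·p^{1/2}, then H ≤ K·g(p)·p^{1/4}·log p, where K = πe/√2 and g(p) = sqrt( (1 + 4/(3·log p)) / ( (1 − 1/(e²·log p)) · f(K·p^{1/4}/(2e²), 89) ) ). -/
/-- The function `f(X,u)` from Lemma 3.4 of the paper. -/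
noncomputable def burgessF (X : ℝ) (u : ℕ) : ℝ :=
  1 - (Real.pi ^ 2 / 3) *
    (1 / (2 * X ^ 2) + 1 / (2 * X) + (1 / (1 - (u : ℝ)⁻¹)) * ((1 + Real.log X) / X))


section Stepanov
open Polynomial

/-- Polynomials with pairwise distinct orders of vanishing at `0` are linearly independent. -/
theorem wb_indep {E ι : Type*} [Field E] [Fintype ι] (d : ι → ℕ) (hd : Function.Injective d)
    (h : ι → E[X]) (hh : ∀ i, (h i).coeff 0 ≠ 0) (g : ι → E) (hg : ∃ i, g i ≠ 0) :
    ∑ i, C (g i) * (X ^ d i * h i) ≠ 0 := by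
  classical
  obtain ⟨i0, hi0⟩ := hg
  obtain ⟨t, ht, hmin⟩ := Finset.exists_min_image (Finset.univ.filter (fun i => g i ≠ 0)) d
    ⟨i0, by simpa using hi0⟩
  intro h0
  have h1 := congrArg (fun P => P.coeff (d t)) h0
  simp only [finsetSum_coeff, coeff_zero, coeff_C_mul] at h1
  rw [Finset.sum_eq_single t] at h1
  · rw [coeff_X_pow_mul', if_pos le_rfl] at h1
    simp only [Nat.sub_self, mul_eq_zero] at h1
    rcases h1 with h1 | h1
    · simp at ht; exact ht h1
    · exact hh t h1
  · intro b _ hb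
    by_cases hgb : g b = 0
    · simp [hgb]
    · have h2 := hmin b (by simpa using hgb)
      have h3 : d t ≠ d b := fun h => hb (hd h.symm)
      rw [coeff_X_pow_mul', if_neg (by omega)]; simp
  · simp

set_option maxHeartbeats 1000000 in
theorem wb_stepanov_core {E : Type*} [Field E] [Fintype E] [DecidableEq E] (p : ℕ) [Fact p.Prime]
    [CharP E p] (l : ℕ) (hl : l.Prime) (D D' c c2 s0 d : ℕ) (hD : D = p ^ d)
    (hQ : Fintype.card E = D * D')
    (hc : l * c + 1 = Fintype.card E) (hcs : c + s0 = D * c2) (hs0 : s0 < D) (hD1 : 1 < D)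
    (e : ℕ) (he : Nat.Coprime e l) (f1 : E[X]) (hf1 : f1.coeff 0 ≠ 0)
    (m : ℕ) (hm : (X ^ e * f1).natDegree ≤ m)
    (J R : ℕ) (hR : m * l ^ 2 + l * R ≤ D') (hJ : l * m * D + J + D * R < l * J * R)
    (γ : E) :
    (Finset.univ.filter (fun x : E => (X ^ e * f1).eval x ^ c = γ)).card
      ≤ m * (l * c2) + D' * J + R := by
  classical
  set f := X ^ e * f1 with hf
  have hDpos : 0 < D := by rw [hD]; exact pow_pos (Fact.out : p.Prime).pos _
  have hl2 := hl.two_le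
  have hf1ne : f1 ≠ 0 := by rintro rfl; simp at hf1
  have hem : e ≤ m := by
    rw [hf, natDegree_mul (by simp) hf1ne, natDegree_X_pow] at hm; omega
  obtain ⟨δ, hδ, hδl⟩ : ∃ δ, l * c2 = D' + δ ∧ δ < l := by
    have h1 : D * (l * c2) + 1 = D * D' + l * s0 := by
      have : l * (c + s0) = l * (D * c2) := by rw [hcs]
      nlinarith
    have h2 : D' ≤ l * c2 := by
      by_contra hlt
      push Not at hlt
      have : D * (l * c2 + 1) ≤ D * D' := Nat.mul_le_mul_left _ hlt
      have h3 : D * (l * c2) + D ≤ D * D' := by linarith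
      have : 1 ≤ l * c2 ∨ c2 = 0 := by
        rcases Nat.eq_zero_or_pos c2 with h | h
        · right; exact h
        · left; exact Nat.mul_pos hl.pos h
      have : l * s0 = 0 := by nlinarith
      have hs : s0 = 0 := by rcases Nat.mul_eq_zero.mp this with h | h <;> omega
      subst hs
      have hDd : D ∣ 1 := by
        have : D ∣ D * (l * c2) + 1 := by rw [h1]; simp
        exact (Nat.dvd_add_right (Dvd.intro _ rfl)).mp this
      have : D = 1 := Nat.dvd_one.mp hDd
      omega
    obtain ⟨δ, hδ⟩ := Nat.exists_eq_add_of_le h2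
    refine ⟨δ, hδ, ?_⟩
    rw [hδ] at h1
    by_contra hge
    push Not at hge
    have : D * l ≤ D * δ := Nat.mul_le_mul_left _ hge
    have : l * (s0 + 1) ≤ l * D := Nat.mul_le_mul_left _ hs0
    nlinarith
  let ι := Fin l × Fin J × Fin R
  obtain ⟨n, hn⟩ : ∃ n, n = l * m * D + J + D * R := ⟨_, rfl⟩
  -- low degree polynomials
  let v : ι → E[X] := fun t => C (γ ^ (t.1 : ℕ)) * (f ^ ((t.1 : ℕ) * s0) * X ^ ((t.2.1 : ℕ) + D * (t.2.2 : ℕ)))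
  have hv : ∀ t, v t ∈ degreeLT E n := by
    intro t
    rw [mem_degreeLT]
    refine lt_of_le_of_lt degree_le_natDegree ?_
    norm_cast
    have h1 : (v t).natDegree ≤ (t.1 : ℕ) * s0 * m + ((t.2.1 : ℕ) + D * (t.2.2 : ℕ)) := by
      refine (natDegree_C_mul_le _ _).trans ?_
      refine natDegree_mul_le.trans ?_
      rw [natDegree_X_pow]
      refine Nat.add_le_add_right (natDegree_pow_le.trans ?_) _
      exact Nat.mul_le_mul_left _ hm
    refine lt_of_le_of_lt h1 ?_
    have h2 : (t.1 : ℕ) * s0 * m ≤ l * D * m :=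
      Nat.mul_le_mul_right _ (Nat.mul_le_mul t.1.2.le hs0.le)
    have h3 : D * (t.2.2 : ℕ) ≤ D * R := Nat.mul_le_mul_left _ t.2.2.2.le
    have h4 := t.2.1.2
    rw [hn]
    nlinarith
  have hnot : ¬ LinearIndependent E (fun t : ι => (⟨v t, hv t⟩ : degreeLT E n)) := by
    intro hli
    have := hli.fintype_card_le_finrank
    rw [(degreeLTEquiv E n).finrank_eq, Module.finrank_fin_fun] at this
    simp only [ι, Fintype.card_prod, Fintype.card_fin] at this
    have h5 : l * (J * R) = l * J * R := by ring
    rw [h5] at this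
    omega
  rw [Fintype.not_linearIndependent_iff] at hnot
  obtain ⟨ρ, hρ, hρ0⟩ := hnot
  have hρ' : ∑ t, C (ρ t) * v t = 0 := by
    have := congrArg (Subtype.val) hρ
    simpa [smul_eq_C_mul] using this
  -- D-th roots
  have hroot : ∀ y : E, ∃ z : E, z ^ D = y := by
    intro y
    have : Function.Surjective (iterateFrobenius E p d) :=
      Finite.surjective_of_injective (iterateFrobenius E p d).injective
    obtain ⟨z, hz⟩ := this y
    exact ⟨z, by rw [← hz, iterateFrobenius_def, hD]⟩
  choose rt hrt using hroot
  let dd : ι → ℕ := fun t => e * (t.1 : ℕ) * c2 + D' * (t.2.1 : ℕ) + (t.2.2 : ℕ)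
  have hdd : Function.Injective dd := by
    rintro ⟨i, j, b⟩ ⟨i', j', b'⟩ h
    simp only [dd] at h
    have key : ∀ (i : Fin l) (j : Fin J) (b : Fin R),
        l * (e * (i : ℕ) * c2 + D' * (j : ℕ) + (b : ℕ)) =
          D' * (e * i + l * j) + (e * i * δ + l * b) ∧ e * (i : ℕ) * δ + l * b < D' := by
      intro i j b
      constructor
      · have : l * (e * (i : ℕ) * c2 + D' * (j : ℕ) + (b : ℕ))
          = e * i * (l * c2) + l * D' * j + l * b := by ring
        rw [this, hδ]; ring
      · have h1 : e * (i : ℕ) * δ ≤ m * l * l :=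
          Nat.mul_le_mul (Nat.mul_le_mul hem i.2.le) hδl.le
        have h2 : l * (b : ℕ) < l * R := Nat.mul_lt_mul_of_pos_left b.2 hl.pos
        nlinarith
    have hD'pos : 0 < D' := by
      have := (key i j b).2; omega
    have h2 : (e * (i : ℕ) + l * j) = e * (i' : ℕ) + l * j' := by
      have e1 := key i j b
      have e2 := key i' j' b'
      rw [h, e2.1] at e1
      have := congrArg (· / D') e1.1
      simp only [Nat.mul_add_div hD'pos, Nat.div_eq_of_lt e1.2, Nat.div_eq_of_lt e2.2] at this
      omega
    have hi : (i : ℕ) = i' := by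
      have h3 : e * (i : ℕ) ≡ e * (i' : ℕ) [MOD l] := by
        have := congrArg (· % l) h2
        simpa [Nat.ModEq, Nat.add_mul_mod_self_left] using this
      have h4 : (i : ℕ) ≡ i' [MOD l] := Nat.ModEq.cancel_left_of_coprime (by
        rw [Nat.gcd_comm]; exact he) h3
      have := h4
      unfold Nat.ModEq at this
      rwa [Nat.mod_eq_of_lt i.2, Nat.mod_eq_of_lt i'.2] at this
    rw [hi] at h2 h
    have hj : (j : ℕ) = j' := by
      have : l * (j : ℕ) = l * j' := by omega
      exact Nat.eq_of_mul_eq_mul_left hl.pos this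
    rw [hj] at h
    have hb : (b : ℕ) = b' := by omega
    exact Prod.ext (Fin.ext hi) (Prod.ext (Fin.ext hj) (Fin.ext hb))
  let G : E[X] := ∑ t : ι, C (rt (ρ t)) * (X ^ dd t * f1 ^ ((t.1 : ℕ) * c2))
  have hG0 : G ≠ 0 := by
    apply wb_indep dd hdd
    · intro t
      rw [coeff_zero_eq_eval_zero, eval_pow, ← coeff_zero_eq_eval_zero]
      exact pow_ne_zero _ hf1
    · obtain ⟨t, ht⟩ := hρ0
      refine ⟨t, fun h => ht ?_⟩
      rw [← hrt (ρ t), h, zero_pow hDpos.ne']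
  have hGe : ∀ t : ι, X ^ dd t * f1 ^ ((t.1 : ℕ) * c2)
      = f ^ ((t.1 : ℕ) * c2) * X ^ (D' * (t.2.1 : ℕ) + (t.2.2 : ℕ)) := by
    intro t
    simp only [dd, hf, mul_pow, ← pow_mul, pow_add]
    ring
  have hGdeg : G.natDegree ≤ m * (l * c2) + D' * J + R := by
    apply natDegree_sum_le_of_forall_le
    intro t _
    refine (natDegree_C_mul_le _ _).trans ?_
    rw [hGe]
    refine natDegree_mul_le.trans ?_
    rw [natDegree_X_pow]
    have h1 : (f ^ ((t.1 : ℕ) * c2)).natDegree ≤ l * c2 * m := by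
      refine natDegree_pow_le.trans (Nat.mul_le_mul (Nat.mul_le_mul_right _ t.1.2.le) hm)
    have h2 : D' * (t.2.1 : ℕ) ≤ D' * J := Nat.mul_le_mul_left _ t.2.1.2.le
    have h3 := t.2.2.2
    nlinarith
  have hsub : Finset.univ.filter (fun x : E => f.eval x ^ c = γ) ⊆ G.roots.toFinset := by
    intro x hx
    simp only [Finset.mem_filter, Finset.mem_univ, true_and] at hx
    rw [Multiset.mem_toFinset, mem_roots hG0, IsRoot]
    have hpow : (G.eval x) ^ D = 0 := by
      have h1 : (G.eval x) ^ D = ∑ t : ι, (ρ t) * (v t).eval x := by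
        simp only [G, eval_finsetSum]
        rw [hD, sum_pow_char_pow]
        refine Finset.sum_congr rfl fun t _ => ?_
        rw [hGe, ← hD]
        simp only [eval_mul, eval_C, eval_pow, eval_X, v]
        rw [mul_pow, hrt]
        congr 1
        have hxQ : x ^ (D * D') = x := by rw [← hQ]; exact FiniteField.pow_card x
        rw [mul_pow, ← pow_mul, ← pow_mul]
        have e1 : (t.1 : ℕ) * c2 * D = c * t.1 + t.1 * s0 := by
          have : (t.1 : ℕ) * c2 * D = t.1 * (D * c2) := by ring
          rw [this, ← hcs]; ring
        rw [e1, pow_add, pow_mul, hx]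
        have e2 : (D' * (t.2.1 : ℕ) + (t.2.2 : ℕ)) * D = D * D' * t.2.1 + D * t.2.2 := by ring
        rw [e2, pow_add, pow_mul x (D * D'), hxQ, pow_add]
        ring
      rw [h1]
      have := congrArg (eval x) hρ'
      simpa [eval_finsetSum] using this
    exact pow_eq_zero_iff hDpos.ne' |>.mp hpow
  calc _ ≤ G.roots.toFinset.card := Finset.card_le_card hsub
    _ ≤ Multiset.card G.roots := Multiset.toFinset_card_le _
    _ ≤ G.natDegree := card_roots' _
    _ ≤ _ := hGdeg
end Stepanov
section Stepanov2
open Polynomial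

set_option maxHeartbeats 1000000 in
theorem wb_stepanov (p : ℕ) [Fact p.Prime] (l : ℕ) (hl : l.Prime) (m : ℕ) :
    ∃ C : ℕ, ∀ (E : Type) [Field E] [Fintype E] [DecidableEq E] [CharP E p] (n c : ℕ),
      Fintype.card E = p ^ n → l * c + 1 = p ^ n →
      ∀ (e : ℕ) (f1 : E[X]), Nat.Coprime e l → f1.coeff 0 ≠ 0 → (X ^ e * f1).natDegree ≤ m →
      ∀ γ : E, (Finset.univ.filter (fun x : E => (X ^ e * f1).eval x ^ c = γ)).card * l
        ≤ p ^ n + C * p ^ (n - n / 2) := by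
  obtain ⟨t, ht⟩ : ∃ t, t = 2 * l * m + 4 := ⟨_, rfl⟩
  obtain ⟨D0, hD0⟩ : ∃ D0, D0 = 2 * (l + m * l ^ 2) + 2 * t + 2 := ⟨_, rfl⟩
  refine ⟨l * D0 + (l * m * (1 + l) + l * t + 1), ?_⟩
  intro E _ _ _ _ n c hcard hc e f1 he hf1 hm γ
  obtain ⟨D, hD⟩ : ∃ D, D = p ^ (n / 2) := ⟨_, rfl⟩
  obtain ⟨D', hD'⟩ : ∃ D', D' = p ^ (n - n / 2) := ⟨_, rfl⟩
  have hp := (Fact.out : p.Prime)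
  have hDD : p ^ n = D * D' := by rw [hD, hD', ← pow_add]; congr 1; omega
  have hle : D ≤ D' := by rw [hD, hD']; exact Nat.pow_le_pow_right hp.pos (by omega)
  have hl2 := hl.two_le
  rw [← hD', hDD]
  rcases le_or_gt D D0 with hsmall | hbig
  · have h1 : (Finset.univ.filter (fun x : E => (X ^ e * f1).eval x ^ c = γ)).card ≤ D * D' := by
      rw [← hDD, ← hcard]; exact Finset.card_le_univ _
    have h2 : D * D' ≤ D0 * D' := Nat.mul_le_mul_right _ hsmall
    calc _ ≤ D0 * D' * l := Nat.mul_le_mul_right _ (h1.trans h2)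
      _ = l * D0 * D' := by ring
      _ ≤ (l * D0 + (l * m * (1 + l) + l * t + 1)) * D' := Nat.mul_le_mul_right _ (by omega)
      _ ≤ _ := Nat.le_add_left _ _
  · have hDpos : 0 < D := by omega
    obtain ⟨c2, hc2⟩ : ∃ c2, c2 = (c + (D - 1)) / D := ⟨_, rfl⟩
    have hmd := Nat.div_add_mod (c + (D - 1)) D
    have hmlt := Nat.mod_lt (c + (D - 1)) hDpos
    rw [← hc2] at hmd
    obtain ⟨s0, hs0⟩ : ∃ s0, c + s0 = D * c2 := ⟨D * c2 - c, by omega⟩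
    have hs0D : s0 < D := by omega
    have hq := Nat.div_add_mod D' l
    have hqlt := Nat.mod_lt D' hl.pos
    have hdq := Nat.div_add_mod D l
    have hdqlt := Nat.mod_lt D hl.pos
    obtain ⟨R, hR⟩ : ∃ R, R + m * l = D' / l := by
      refine ⟨D' / l - m * l, Nat.sub_add_cancel ?_⟩
      rw [Nat.le_div_iff_mul_le hl.pos]
      nlinarith
    obtain ⟨J, hJ⟩ : ∃ J, J = D / l + t := ⟨_, rfl⟩
    have hlR : m * l ^ 2 + l * R = l * (D' / l) := by rw [← hR]; ring
    have hlR2 : D ≤ 2 * (l * R) := by omega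
    have hJD : J ≤ D := by
      have : D / l ≤ D / 2 := Nat.div_le_div_left hl2 (by norm_num)
      omega
    have hlJ : D + l * (t - 1) ≤ l * J := by
      have : l * (t - 1) + l = l * t := by
        rw [ht, show 2 * l * m + 4 - 1 = 2 * l * m + 3 by omega]; ring
      rw [hJ, Nat.mul_add]; omega
    have hlJ2 : l * J ≤ D + l * t := by rw [hJ, Nat.mul_add]; omega
    have hmain := wb_stepanov_core p l hl D D' c c2 s0 (n / 2) hD (by rw [hcard, hDD])
      (by rw [hc, hcard]) hs0 hs0D (by omega) e he f1 hf1 m hm J R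
      (by rw [hlR]; omega) (by
        have h1 : (D + l * (t - 1)) * R ≤ l * J * R := Nat.mul_le_mul_right _ hlJ
        have h2 : (t - 1) = 2 * l * m + 3 := by omega
        rw [h2] at h1
        have h3 : (2 * l * m + 3) * D ≤ (2 * l * m + 3) * (2 * (l * R)) :=
          Nat.mul_le_mul_left _ hlR2
        nlinarith) γ
    have hlc2 : l * c2 ≤ D' + l := by
      have h1 : D * (l * c2) ≤ D * (D' + l) := by
        have : D * (l * c2) = l * (c + s0) := by rw [hs0]; ring
        have h2 : l * s0 ≤ l * D := Nat.mul_le_mul_left _ hs0D.le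
        nlinarith
      exact Nat.le_of_mul_le_mul_left h1 hDpos
    have hD'pos : 1 ≤ D' := by omega
    have hlRD : l * R ≤ D' := by omega
    calc _ ≤ (m * (l * c2) + D' * J + R) * l := Nat.mul_le_mul_right _ hmain
      _ = l * m * (l * c2) + D' * (l * J) + l * R := by ring
      _ ≤ l * m * (D' + l * D') + D' * (D + l * t) + D' := by
          gcongr
          calc l * c2 ≤ D' + l := hlc2
            _ ≤ D' + l * D' := by gcongr; exact Nat.le_mul_of_pos_right _ hD'pos
      _ ≤ _ := by nlinarith [Nat.zero_le (l * D0 * D')]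
end Stepanov2
section CharSum
open Polynomial

theorem wb_ker {E : Type*} [Field E] [Fintype E] (l : ℕ) (hl : l.Prime) (c : ℕ)
    (hc : l * c + 1 = Fintype.card E) (ψ : E →* ℂ) (hψl : ∀ y, y ≠ 0 → ψ y ^ l = 1)
    (hψ1 : ∃ y, y ≠ 0 ∧ ψ y ≠ 1) (y z : E) (hy : y ≠ 0) (hz : z ≠ 0) (h : ψ y = ψ z) :
    y ^ c = z ^ c := by
  classical
  obtain ⟨g, hg⟩ := IsCyclic.exists_generator (α := Eˣ)
  have hgl : ψ (g : E) ^ l = 1 := hψl _ g.ne_zero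
  have hg1 : ψ (g : E) ≠ 1 := by
    intro h1
    obtain ⟨w, hw, hw1⟩ := hψ1
    obtain ⟨k, hk⟩ := Subgroup.mem_zpowers_iff.mp (hg (Units.mk0 w hw))
    apply hw1
    have : Units.map ψ (Units.mk0 w hw) = 1 := by
      rw [← hk, map_zpow]
      have : Units.map ψ g = 1 := by ext; simpa using h1
      rw [this, one_zpow]
    have := congrArg Units.val this
    simpa using this
  have : Fact l.Prime := ⟨hl⟩
  have hord : orderOf (ψ (g : E)) = l := orderOf_eq_prime hgl hg1
  have hordu : orderOf (Units.map ψ g) = l := by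
    rw [← orderOf_units]; simpa using hord
  have hcardu : Fintype.card Eˣ = l * c := by
    rw [Fintype.card_units]; omega
  set w : Eˣ := Units.mk0 y hy / Units.mk0 z hz with hw
  have hψw : Units.map ψ w = 1 := by
    rw [hw, _root_.map_div, div_eq_one]
    ext; simpa using h
  obtain ⟨k, hk⟩ := Subgroup.mem_zpowers_iff.mp (hg w)
  have hdvd : (l : ℤ) ∣ k := by
    rw [← hk, map_zpow] at hψw
    rw [← hordu]
    exact orderOf_dvd_iff_zpow_eq_one.mpr hψw
  obtain ⟨k', rfl⟩ := hdvd
  have hwc : w ^ c = 1 := by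
    rw [← hk, ← zpow_natCast, ← zpow_mul]
    have : (l : ℤ) * k' * c = ((l * c : ℕ) : ℤ) * k' := by push_cast; ring
    rw [this, zpow_mul, zpow_natCast, ← hcardu, pow_card_eq_one, one_zpow]
  rw [hw, div_pow, div_eq_one] at hwc
  have := congrArg Units.val hwc
  simpa using this

theorem wb_sum_bound {E : Type*} [Field E] [Fintype E] [DecidableEq E] (l : ℕ) (hl : l.Prime)
    (c : ℕ) (hc : l * c + 1 = Fintype.card E) (ψ : E →* ℂ) (hψ0 : ψ 0 = 0)
    (hψl : ∀ y, y ≠ 0 → ψ y ^ l = 1)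
    (hψ1 : ∃ y, y ≠ 0 ∧ ψ y ≠ 1) (f : E → E) (B m : ℝ)
    (hB0 : 0 ≤ B)
    (hB : ∀ γ, ((Finset.univ.filter (fun x : E => f x ^ c = γ)).card : ℝ) * l
      ≤ Fintype.card E + B)
    (hm : ((Finset.univ.filter (fun x : E => f x = 0)).card : ℝ) ≤ m) :
    ‖∑ x, ψ (f x)‖ ≤ B + m := by
  classical
  have hlpos : (0 : ℝ) < l := by exact_mod_cast hl.pos
  set Z := nthRootsFinset l (1 : ℂ) with hZ
  have hZmem : ∀ z, z ∈ Z ↔ z ^ l = 1 := fun z => mem_nthRootsFinset hl.pos 1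
  have hprim := Complex.isPrimitiveRoot_exp l hl.ne_zero
  have hZcard : Z.card = l := hprim.card_nthRootsFinset
  have hZsum : ∑ z ∈ Z, z = 0 := by
    obtain ⟨ζ, hζ, hζ1⟩ : ∃ ζ : ℂ, ζ ^ l = 1 ∧ ζ ≠ 1 :=
      ⟨_, hprim.pow_eq_one, hprim.ne_one hl.one_lt⟩
    have hζ0 : ζ ≠ 0 := by rintro rfl; simp [hl.ne_zero] at hζ
    have h1 : ∑ z ∈ Z, ζ * z = ∑ z ∈ Z, z := by
      refine Finset.sum_bij (fun z _ => ζ * z) ?_ ?_ ?_ ?_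
      · intro z hz; rw [hZmem] at hz ⊢; rw [mul_pow, hz, hζ, one_mul]
      · intro a _ b _ hab; exact mul_left_cancel₀ hζ0 hab
      · intro b hb
        refine ⟨ζ⁻¹ * b, ?_, by field_simp⟩
        rw [hZmem] at hb ⊢; rw [mul_pow, inv_pow, hζ, hb]; simp
      · intros; rfl
    rw [← Finset.mul_sum] at h1
    have h2 : (ζ - 1) * ∑ z ∈ Z, z = 0 := by rw [sub_mul, h1]; ring
    rcases mul_eq_zero.mp h2 with h | h
    · exact absurd (sub_eq_zero.mp h) hζ1
    · exact h
  set G := Finset.univ.filter (fun x : E => f x ≠ 0) with hG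
  let N : ℂ → ℝ := fun z => ((G.filter (fun x => ψ (f x) = z)).card : ℝ)
  have hmaps : ∀ x ∈ G, ψ (f x) ∈ Z := by
    intro x hx
    rw [hZmem]; exact hψl _ (by simpa [hG] using hx)
  have hNsum : ∑ z ∈ Z, N z = (G.card : ℝ) := by
    rw [Finset.card_eq_sum_card_fiberwise hmaps]; push_cast; rfl
  have hS : ∑ x, ψ (f x) = ∑ z ∈ Z, z * (N z : ℂ) := by
    have h1 : ∑ x, ψ (f x) = ∑ x ∈ G, ψ (f x) := by
      symm
      apply Finset.sum_subset (Finset.subset_univ _)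
      intro x _ hx
      have : f x = 0 := by simpa [hG] using hx
      rw [this, hψ0]
    rw [h1, ← Finset.sum_fiberwise_of_maps_to hmaps]
    refine Finset.sum_congr rfl fun z _ => ?_
    rw [Finset.sum_congr rfl (g := fun _ => z) (fun x hx => (Finset.mem_filter.mp hx).2)]
    rw [Finset.sum_const, nsmul_eq_mul, mul_comm]
    simp [N]
  have hN : ∀ z, N z ≤ (Fintype.card E + B) / l := by
    intro z
    rw [le_div_iff₀ hlpos]
    by_cases hne : (G.filter (fun x => ψ (f x) = z)).Nonempty
    · obtain ⟨x0, hx0⟩ := hne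
      simp only [hG, Finset.mem_filter, Finset.mem_univ, true_and] at hx0
      refine le_trans ?_ (hB (f x0 ^ c))
      gcongr
      simp only [N]
      norm_cast
      apply Finset.card_le_card
      intro x hx
      simp only [hG, Finset.mem_filter, Finset.mem_univ, true_and] at hx ⊢
      exact wb_ker l hl c hc ψ hψl hψ1 _ _ hx.1 hx0.1 (hx.2.trans hx0.2.symm)
    · rw [Finset.not_nonempty_iff_eq_empty] at hne
      simp only [N, hne, Finset.card_empty]
      simp; positivity
  have hS2 : ∑ x, ψ (f x) = ∑ z ∈ Z, z * ((N z - (Fintype.card E + B) / l : ℝ) : ℂ) := by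
    rw [hS]
    push_cast
    simp only [mul_sub, Finset.sum_sub_distrib, ← Finset.sum_mul, hZsum]
    simp
  have hGm : (G.card : ℝ) + m ≥ Fintype.card E := by
    have := Finset.card_filter_add_card_filter_not (s := (Finset.univ : Finset E)) (fun x => f x = 0)
    have h2 : ((Finset.univ.filter (fun x : E => f x = 0)).card : ℝ) + G.card = Fintype.card E := by
      rw [hG]; exact_mod_cast this
    linarith
  rw [hS2]
  calc _ ≤ ∑ z ∈ Z, ‖z * ((N z - (Fintype.card E + B) / l : ℝ) : ℂ)‖ := norm_sum_le _ _
    _ = ∑ z ∈ Z, ((Fintype.card E + B) / l - N z) := by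
        refine Finset.sum_congr rfl fun z hz => ?_
        rw [norm_mul, Complex.norm_eq_one_of_pow_eq_one ((hZmem z).mp hz) hl.ne_zero, one_mul,
          Complex.norm_real, Real.norm_eq_abs, abs_of_nonpos (by linarith [hN z])]
        ring
    _ = Fintype.card E + B - G.card := by
        rw [Finset.sum_sub_distrib, hNsum, Finset.sum_const, hZcard, nsmul_eq_mul]
        field_simp
    _ ≤ B + m := by linarith
end CharSum
section CharSum2
open Polynomial

noncomputable instance wbFintype (p : ℕ) [Fact p.Prime] (n : ℕ) : Fintype (GaloisField p n) :=
  Fintype.ofFinite _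

/-- The extension character sums. -/
noncomputable def wbS (p : ℕ) [Fact p.Prime] (χ : MulChar (ZMod p) ℂ) (A : Finset (ZMod p))
    (ex : ZMod p → ℕ) (n : ℕ) : ℂ :=
  ∑ x : GaloisField p n, ∏ a ∈ A,
    χ (Algebra.norm (ZMod p) (algebraMap (ZMod p) (GaloisField p n) a - x)) ^ ex a

theorem wb_S_bound (p : ℕ) [Fact p.Prime] (l : ℕ) (hl : l.Prime) (χ : MulChar (ZMod p) ℂ)
    (hχl : χ ^ l = 1) (hχ1 : χ ≠ 1) (A : Finset (ZMod p)) (hA : A.Nonempty)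
    (ex : ZMod p → ℕ) (hex : ∀ a ∈ A, Nat.Coprime (ex a) l) :
    ∃ K0 : ℝ, ∀ n : ℕ, n ≠ 0 → ‖wbS p χ A ex n‖ ≤ K0 * (Real.sqrt p) ^ n := by
  classical
  obtain ⟨a0, ha0⟩ := hA
  obtain ⟨m, hm⟩ : ∃ m, m = ∑ a ∈ A, ex a := ⟨_, rfl⟩
  obtain ⟨K0, hC⟩ := wb_stepanov p l hl m
  have hp := (Fact.out : p.Prime)
  have hp1 : (1 : ℝ) ≤ p := by exact_mod_cast hp.one_le
  have hsq1 : 1 ≤ Real.sqrt p := Real.one_le_sqrt.mpr hp1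
  refine ⟨K0 * Real.sqrt p + m, ?_⟩
  intro n hn
  let E := GaloisField p n
  have hcard : Fintype.card E = p ^ n := by
    rw [← Nat.card_eq_fintype_card]; exact GaloisField.card p n hn
  -- l divides p - 1
  have hlp : l ∣ p - 1 := by
    have : Fact l.Prime := ⟨hl⟩
    have h1 : orderOf χ = l := orderOf_eq_prime hχl hχ1
    have h2 := MulChar.orderOf_dvd_card_sub_one (F := ZMod p) χ
    rwa [h1, ZMod.card] at h2
  obtain ⟨c, hc⟩ : ∃ c, l * c + 1 = p ^ n := by
    have h1 : p - 1 ∣ p ^ n - 1 := by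
      simpa using Nat.sub_dvd_pow_sub_pow p 1 n
    obtain ⟨c, hc⟩ := hlp.trans h1
    exact ⟨c, by have := Nat.one_le_pow n p hp.pos; omega⟩
  let ψ : E →* ℂ := χ.toMonoidHom.comp (Algebra.norm (ZMod p))
  have hψ : ∀ y, ψ y = χ (Algebra.norm (ZMod p) y) := fun y => rfl
  let ι := algebraMap (ZMod p) E
  let f1 : E[X] := C ((-1) ^ ex a0) * ∏ a ∈ A.erase a0, (C (ι a - ι a0) - X) ^ ex a
  have hf : X ^ ex a0 * f1 = ∏ a ∈ A, (C (ι a - ι a0) - X) ^ ex a := by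
    rw [← Finset.mul_prod_erase A _ ha0]
    simp only [f1, sub_self, map_zero, zero_sub]
    rw [neg_pow (X : E[X])]
    simp only [C_pow, C_neg, C_1]; ring
  have hfe : ∀ x, (X ^ ex a0 * f1).eval x = ∏ a ∈ A, (ι a - (x + ι a0)) ^ ex a := by
    intro x
    rw [hf, eval_prod]
    refine Finset.prod_congr rfl fun a _ => ?_
    simp only [eval_pow, eval_sub, eval_C, eval_X]
    congr 1; ring
  have hf1 : f1.coeff 0 ≠ 0 := by
    rw [coeff_zero_eq_eval_zero]
    simp only [f1, eval_mul, eval_C, eval_prod, eval_pow, eval_sub, eval_X, sub_zero]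
    refine mul_ne_zero (by simp) ?_
    rw [Finset.prod_ne_zero_iff]
    intro a ha
    refine pow_ne_zero _ (sub_ne_zero.mpr fun h => ?_)
    exact (Finset.mem_erase.mp ha).1 (ι.injective h)
  have hdeg : (X ^ ex a0 * f1).natDegree ≤ m := by
    rw [hf, hm]
    refine (natDegree_prod_le _ _).trans (Finset.sum_le_sum fun a _ => ?_)
    refine natDegree_pow_le.trans ?_
    have : (C (ι a - ι a0) - X : E[X]).natDegree ≤ 1 := by
      refine (natDegree_sub_le _ _).trans ?_; simp
    calc _ ≤ ex a * 1 := Nat.mul_le_mul_left _ this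
      _ = _ := mul_one _
  have hne : X ^ ex a0 * f1 ≠ 0 := by
    refine mul_ne_zero (by simp) ?_
    rintro h; rw [h] at hf1; simp at hf1
  have hmain := wb_sum_bound (E := E) l hl c (by rw [hc, hcard]) ψ
    (by rw [hψ, Algebra.norm_zero, MulChar.map_zero])
    (by
      intro y hy
      rw [hψ, ← MulChar.pow_apply' _ hl.ne_zero, hχl]
      exact MulChar.one_apply (IsUnit.mk0 _ (by rwa [Ne, Algebra.norm_eq_zero_iff])))
    (by
      obtain ⟨w, hw⟩ := MulChar.ne_one_iff.mp hχ1
      obtain ⟨y, hy⟩ := FiniteField.norm_surjective (ZMod p) E (w : ZMod p)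
      refine ⟨y, ?_, by rw [hψ, hy]; exact hw⟩
      rintro rfl
      rw [Algebra.norm_zero] at hy
      exact w.ne_zero hy.symm)
    (fun x => (X ^ ex a0 * f1).eval x) (K0 * p ^ (n - n / 2)) m (by positivity)
    (by
      intro γ
      have := hC E n c hcard hc (ex a0) f1 (hex a0 ha0) hf1 hdeg γ
      rw [hcard]; exact_mod_cast this)
    (by
      refine Nat.cast_le.mpr ?_
      calc _ ≤ (X ^ ex a0 * f1).roots.toFinset.card := by
            apply Finset.card_le_card
            intro x hx
            rw [Multiset.mem_toFinset, mem_roots hne]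
            simpa using hx
        _ ≤ Multiset.card (X ^ ex a0 * f1).roots := Multiset.toFinset_card_le _
        _ ≤ (X ^ ex a0 * f1).natDegree := card_roots' _
        _ ≤ m := hdeg)
  have hSeq : wbS p χ A ex n = ∑ x : E, ψ ((X ^ ex a0 * f1).eval x) := by
    unfold wbS
    have h1 := Fintype.sum_equiv (Equiv.addRight (ι a0))
      (fun x : E => ψ ((X ^ ex a0 * f1).eval x))
      (fun x : E => ∏ a ∈ A, χ (Algebra.norm (ZMod p) (algebraMap (ZMod p) E a - x)) ^ ex a) (by
        intro x
        rw [hfe, map_prod]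
        refine Finset.prod_congr rfl fun a _ => ?_
        rw [map_pow]; rfl)
    rw [h1]
  rw [hSeq]
  refine hmain.trans ?_
  have hpow : (p : ℝ) ^ (n - n / 2) ≤ Real.sqrt p * Real.sqrt p ^ n := by
    have : (p : ℝ) = Real.sqrt p ^ 2 := by rw [Real.sq_sqrt (by positivity)]
    rw [← pow_succ']
    conv_lhs => rw [this]
    rw [← pow_mul]
    exact pow_le_pow_right₀ hsq1 (by omega)
  have h2 : (1 : ℝ) ≤ Real.sqrt p ^ n := one_le_pow₀ hsq1
  have hm0 : (0 : ℝ) ≤ m := by positivity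
  calc (K0 : ℝ) * p ^ (n - n / 2) + m ≤ K0 * (Real.sqrt p * Real.sqrt p ^ n) + m * Real.sqrt p ^ n := by
        gcongr
        nlinarith
    _ = _ := by ring
end CharSum2
section Euler
open Polynomial

variable (F : Type) [Field F] [Finite F]

theorem wb_monic_finite (n : ℕ) : {g : F[X] | g.Monic ∧ g.natDegree = n}.Finite := by
  have : Finite (degreeLT F (n + 1)) := Finite.of_equiv _ (degreeLTEquiv F (n + 1)).toEquiv.symm
  refine Set.Finite.subset (Set.toFinite (degreeLT F (n + 1) : Set F[X])) ?_
  rintro g ⟨_, hg2⟩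
  show g ∈ degreeLT F (n + 1)
  rw [mem_degreeLT]
  refine lt_of_le_of_lt degree_le_natDegree ?_
  norm_cast; omega

/-- The monic polynomials of degree `n`. -/
noncomputable def wbM (n : ℕ) : Finset F[X] := (wb_monic_finite F n).toFinset

variable {F}

theorem mem_wbM {n : ℕ} {g : F[X]} : g ∈ wbM F n ↔ g.Monic ∧ g.natDegree = n := by
  simp [wbM]

variable (F) in
open Classical in
/-- The monic irreducible polynomials of degree `n`. -/
noncomputable def wbI (n : ℕ) : Finset F[X] := (wbM F n).filter Irreducible

theorem mem_wbI {n : ℕ} {g : F[X]} :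
    g ∈ wbI F n ↔ g.Monic ∧ g.natDegree = n ∧ Irreducible g := by
  simp [wbI, mem_wbM, and_assoc]

open Classical in
theorem wb_degree_sum {n : ℕ} {g : F[X]} (hg : g ∈ wbM F n) :
    n = ∑ d ∈ Finset.Icc 1 n, ∑ P ∈ wbI F d, ∑ k ∈ Finset.Icc 1 n,
      if P ^ k ∣ g then d else 0 := by
  obtain ⟨hmon, hdeg⟩ := mem_wbM.mp hg
  have hg0 : g ≠ 0 := hmon.ne_zero
  set s := UniqueFactorizationMonoid.normalizedFactors g with hs
  have hirr : ∀ P ∈ s, Irreducible P := fun P hP =>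
    UniqueFactorizationMonoid.irreducible_of_normalized_factor P hP
  have hPm : ∀ P ∈ s, P.Monic := fun P hP => by
    have h1 := UniqueFactorizationMonoid.normalize_normalized_factor P hP
    rw [← h1]; exact monic_normalize (hirr P hP).ne_zero
  have hprod : s.prod = g := by
    have h1 := UniqueFactorizationMonoid.prod_normalizedFactors hg0
    have hsm : s.prod.Monic := by
      have h2 := monic_multiset_prod_of_monic s id hPm
      simpa using h2
    exact eq_of_monic_of_associated hsm hmon h1
  have hcount : ∀ P, Irreducible P → P.Monic → ∀ k, P ^ k ∣ g ↔ k ≤ s.count P := by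
    intro P hP hPm k
    have hn : normalize P = P := hPm.normalize_eq_self
    rw [UniqueFactorizationMonoid.dvd_iff_normalizedFactors_le_normalizedFactors
      (pow_ne_zero _ hP.ne_zero) hg0, hP.normalizedFactors_pow, hn, Multiset.le_count_iff_replicate_le]
  have h1 : n = ∑ P ∈ s.toFinset, s.count P * P.natDegree := by
    rw [← hdeg]
    conv_lhs => rw [← hprod]
    rw [natDegree_multiset_prod _ (UniqueFactorizationMonoid.zero_notMem_normalizedFactors _),
      Finset.sum_multiset_map_count]
    rfl
  have hin : ∀ P ∈ s.toFinset, P.natDegree ∈ Finset.Icc 1 n := by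
    intro P hP
    rw [Multiset.mem_toFinset] at hP
    rw [Finset.mem_Icc, ← hdeg]
    exact ⟨(hirr P hP).natDegree_pos,
      natDegree_le_of_dvd (UniqueFactorizationMonoid.dvd_of_mem_normalizedFactors hP) hg0⟩
  conv_lhs => rw [h1]
  rw [← Finset.sum_fiberwise_of_maps_to hin]
  refine Finset.sum_congr rfl fun d hd => ?_
  have hd1 := (Finset.mem_Icc.mp hd).1
  have hcl : ∀ P ∈ wbI F d, (∑ k ∈ Finset.Icc 1 n, if P ^ k ∣ g then d else 0) = s.count P * d := by
    intro P hP
    obtain ⟨hP1, hP2, hP3⟩ := mem_wbI.mp hP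
    have hle : s.count P ≤ n := by
      have h2 : P ^ (s.count P) ∣ g := (hcount P hP3 hP1 _).mpr le_rfl
      have h3 := natDegree_le_of_dvd h2 hg0
      rw [natDegree_pow, hP2, hdeg] at h3
      nlinarith
    rw [← Finset.sum_filter, Finset.sum_const, smul_eq_mul]
    congr 1
    have : (Finset.Icc 1 n).filter (fun k => P ^ k ∣ g) = Finset.Icc 1 (s.count P) := by
      ext k
      simp only [Finset.mem_filter, Finset.mem_Icc, hcount P hP3 hP1]
      omega
    rw [this]; simp
  rw [Finset.sum_congr rfl hcl]
  refine (Finset.sum_subset_zero_on_sdiff ?_ ?_ ?_)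
  · intro P hP
    rw [Finset.mem_filter, Multiset.mem_toFinset] at hP
    exact mem_wbI.mpr ⟨hPm P hP.1, hP.2, hirr P hP.1⟩
  · intro P hP
    rw [Finset.mem_sdiff] at hP
    obtain ⟨hP1, hP2, hP3⟩ := mem_wbI.mp hP.1
    have : P ∉ s := fun h => hP.2 (by
      rw [Finset.mem_filter, Multiset.mem_toFinset]; exact ⟨h, hP2⟩)
    rw [Multiset.count_eq_zero.mpr this, zero_mul]
  · intro P hP
    rw [(Finset.mem_filter.mp hP).2]

/-- coefficient of the L-function -/
noncomputable def wbc (L : F[X] →* ℂ) (n : ℕ) : ℂ := ∑ g ∈ wbM F n, L g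

open Classical in
theorem wb_sum_dvd (L : F[X] →* ℂ) (n d k : ℕ) (P : F[X]) (hP : P ∈ wbI F d) :
    (∑ g ∈ wbM F n, if P ^ k ∣ g then L g else 0)
      = if k * d ≤ n then L P ^ k * wbc L (n - k * d) else 0 := by
  obtain ⟨hP1, hP2, hP3⟩ := mem_wbI.mp hP
  have hPk : (P ^ k).Monic := hP1.pow k
  have hdegk : (P ^ k).natDegree = k * d := by rw [natDegree_pow, hP2]
  rw [← Finset.sum_filter]
  split_ifs with h
  · rw [wbc, Finset.mul_sum]
    symm
    refine Finset.sum_bij (fun g _ => P ^ k * g) ?_ ?_ ?_ ?_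
    · intro g hg
      obtain ⟨h1, h2⟩ := mem_wbM.mp hg
      rw [Finset.mem_filter, mem_wbM]
      refine ⟨⟨hPk.mul h1, ?_⟩, Dvd.intro _ rfl⟩
      rw [hPk.natDegree_mul h1, hdegk, h2]; omega
    · intro a _ b _ hab
      exact mul_left_cancel₀ hPk.ne_zero hab
    · intro b hb
      rw [Finset.mem_filter, mem_wbM] at hb
      obtain ⟨⟨hb1, hb2⟩, g, rfl⟩ := hb
      have hgm : g.Monic := hPk.of_mul_monic_left hb1
      refine ⟨g, ?_, rfl⟩
      rw [mem_wbM]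
      refine ⟨hgm, ?_⟩
      rw [hPk.natDegree_mul hgm, hdegk] at hb2
      omega
    · intro g _
      rw [map_mul L, map_pow L]
  · apply Finset.sum_eq_zero
    intro g hg
    exfalso
    rw [Finset.mem_filter, mem_wbM] at hg
    have := natDegree_le_of_dvd hg.2 hg.1.1.ne_zero
    rw [hdegk, hg.1.2] at this
    exact h this

/-- Newton-type identity. -/
theorem wb_newton (L : F[X] →* ℂ) (S : ℕ → ℂ) (n : ℕ)
    (hS : ∀ j ∈ Finset.Icc 1 n, S j = ∑ d ∈ Finset.Icc 1 n, ∑ P ∈ wbI F d,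
      if d ∣ j then (d : ℂ) * L P ^ (j / d) else 0) :
    (n : ℂ) * wbc L n = ∑ j ∈ Finset.Icc 1 n, S j * wbc L (n - j) := by
  classical
  have h1 : (n : ℂ) * wbc L n = ∑ d ∈ Finset.Icc 1 n, ∑ P ∈ wbI F d, ∑ k ∈ Finset.Icc 1 n,
      if k * d ≤ n then (d : ℂ) * L P ^ k * wbc L (n - k * d) else 0 := by
    rw [wbc, Finset.mul_sum]
    have : ∀ g ∈ wbM F n, (n : ℂ) * L g = ∑ d ∈ Finset.Icc 1 n, ∑ P ∈ wbI F d,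
        ∑ k ∈ Finset.Icc 1 n, (d : ℂ) * if P ^ k ∣ g then L g else 0 := by
      intro g hg
      conv_lhs => rw [wb_degree_sum hg]
      push_cast
      simp only [Finset.sum_mul]
      refine Finset.sum_congr rfl fun d _ => Finset.sum_congr rfl fun P _ =>
        Finset.sum_congr rfl fun k _ => ?_
      split_ifs <;> simp
    rw [Finset.sum_congr rfl this, Finset.sum_comm]
    refine Finset.sum_congr rfl fun d _ => ?_
    rw [Finset.sum_comm]
    refine Finset.sum_congr rfl fun P hP => ?_
    rw [Finset.sum_comm]
    refine Finset.sum_congr rfl fun k _ => ?_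
    rw [← Finset.mul_sum, wb_sum_dvd L n d k P hP]
    split_ifs
    · ring
    · simp
  rw [h1]
  have h2 : ∑ j ∈ Finset.Icc 1 n, S j * wbc L (n - j) = ∑ d ∈ Finset.Icc 1 n, ∑ P ∈ wbI F d,
      ∑ j ∈ Finset.Icc 1 n, if d ∣ j then (d : ℂ) * L P ^ (j / d) * wbc L (n - j) else 0 := by
    have : ∀ j ∈ Finset.Icc 1 n, S j * wbc L (n - j) = ∑ d ∈ Finset.Icc 1 n, ∑ P ∈ wbI F d,
        if d ∣ j then (d : ℂ) * L P ^ (j / d) * wbc L (n - j) else 0 := by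
      intro j hj
      rw [hS j hj, Finset.sum_mul]
      refine Finset.sum_congr rfl fun d _ => ?_
      rw [Finset.sum_mul]
      refine Finset.sum_congr rfl fun P _ => ?_
      split_ifs <;> simp
    rw [Finset.sum_congr rfl this, Finset.sum_comm]
    refine Finset.sum_congr rfl fun d _ => ?_
    rw [Finset.sum_comm]
  rw [h2]
  refine Finset.sum_congr rfl fun d hd => Finset.sum_congr rfl fun P _ => ?_
  have hd1 : 0 < d := (Finset.mem_Icc.mp hd).1
  rw [← Finset.sum_filter, ← Finset.sum_filter]
  refine Finset.sum_bij (fun k _ => k * d) ?_ ?_ ?_ ?_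
  · intro k hk
    rw [Finset.mem_filter, Finset.mem_Icc] at hk ⊢
    refine ⟨⟨?_, hk.2⟩, Dvd.intro_left _ rfl⟩
    exact Nat.mul_pos hk.1.1 hd1
  · intro a _ b _ hab
    exact Nat.eq_of_mul_eq_mul_right hd1 hab
  · intro j hj
    rw [Finset.mem_filter, Finset.mem_Icc] at hj
    obtain ⟨⟨hj1, hj2⟩, k, rfl⟩ := hj
    refine ⟨k, ?_, by ring⟩
    rw [Finset.mem_filter, Finset.mem_Icc]
    have hk1 : 1 ≤ k := by
      rcases Nat.eq_zero_or_pos k with h | h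
      · subst h; simp at hj1
      · exact h
    refine ⟨⟨hk1, ?_⟩, by linarith [mul_comm k d]⟩
    nlinarith
  · intro k _
    rw [Nat.mul_div_cancel _ hd1]
end Euler
section LemmaC
open Polynomial

theorem wb_norm_sub {K E : Type} [Field K] [Field E] [Algebra K E] [FiniteDimensional K E]
    (a : K) (x : E) :
    Algebra.norm K (algebraMap K E a - x) =
      ((minpoly K x).eval a) ^ (Module.finrank K E / (minpoly K x).natDegree) := by
  have hx : IsIntegral K x := IsIntegral.of_finite K x
  let pb := IntermediateField.adjoin.powerBasis hx
  let K' := IntermediateField.adjoin K {x}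
  have hgen : pb.gen = IntermediateField.AdjoinSimple.gen K x :=
    IntermediateField.adjoin.powerBasis_gen hx
  have h1 : algebraMap K E a - x =
      algebraMap K' E (algebraMap K K' a - IntermediateField.AdjoinSimple.gen K x) := by
    rw [map_sub, IntermediateField.AdjoinSimple.algebraMap_gen, ← IsScalarTower.algebraMap_apply]
  have h2 : Algebra.norm K (algebraMap K K' a - IntermediateField.AdjoinSimple.gen K x)
      = (minpoly K x).eval a := by
    rw [← hgen, ← IntermediateField.minpoly_gen K x, ← hgen, Algebra.norm_eq_matrix_det pb.basis,
      ← charpoly_leftMulMatrix, Matrix.eval_charpoly, map_sub, AlgHom.commutes]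
    rfl
  have hd : Module.finrank K K' = (minpoly K x).natDegree :=
    IntermediateField.adjoin.finrank hx
  have h3 : Module.finrank K E / (minpoly K x).natDegree = Module.finrank K' E := by
    rw [← hd, ← Module.finrank_mul_finrank K K' E, Nat.mul_div_cancel_left _ Module.finrank_pos]
  rw [h1, ← Algebra.norm_norm (S := K'), Algebra.norm_algebraMap, map_pow, h2, h3]

theorem wb_fiber (p : ℕ) [Fact p.Prime] (j d : ℕ) (hj : j ≠ 0) (hdj : d ∣ j) (P : (ZMod p)[X])
    (hP : P ∈ wbI (ZMod p) d) [DecidableEq (ZMod p)[X]] :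
    (Finset.univ.filter (fun x : GaloisField p j => minpoly (ZMod p) x = P)).card = d := by
  classical
  obtain ⟨hP1, hP2, hP3⟩ := mem_wbI.mp hP
  have hdvd : P ∣ X ^ p ^ j - X := by
    have := (hP3.natDegree_dvd_iff_dvd_X_pow_card_pow_sub_X (n := j)).mp (by rw [hP2]; exact hdj)
    simpa using this
  have hsf : IsSplittingField (ZMod p) (GaloisField p j) (X ^ p ^ j - X) :=
    FiniteField.isSplittingField_of_nat_card_eq p j (GaloisField.card p j hj)
  have hspl : (P.map (algebraMap (ZMod p) (GaloisField p j))).Splits := by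
    refine Splits.of_dvd (IsSplittingField.splits (GaloisField p j) (X ^ p ^ j - X : (ZMod p)[X])) ?_
      ((Polynomial.map_dvd _ hdvd))
    rw [Polynomial.map_ne_zero_iff (algebraMap (ZMod p) (GaloisField p j)).injective]
    exact FiniteField.X_pow_card_pow_sub_X_ne_zero _ hj (Fact.out : p.Prime).one_lt
  have hsep : P.Separable := PerfectField.separable_of_irreducible hP3
  have h := card_rootSet_eq_natDegree hsep hspl
  rw [hP2] at h
  rw [← h, ← Set.toFinset_card]
  congr 1
  ext x
  rw [Finset.mem_filter, Set.mem_toFinset, mem_rootSet_of_ne hP1.ne_zero]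
  constructor
  · rintro ⟨_, rfl⟩; exact minpoly.aeval _ _
  · intro hx
    exact ⟨Finset.mem_univ _, (minpoly.eq_of_irreducible_of_monic hP3 hx hP1).symm⟩

/-- The multiplicative function on polynomials. -/
noncomputable def wbL (p : ℕ) [Fact p.Prime] (χ : MulChar (ZMod p) ℂ) (A : Finset (ZMod p))
    (ex : ZMod p → ℕ) : (ZMod p)[X] →* ℂ where
  toFun g := ∏ a ∈ A, χ (g.eval a) ^ ex a
  map_one' := by simp
  map_mul' f g := by simp [mul_pow, Finset.prod_mul_distrib]

theorem wbL_apply (p : ℕ) [Fact p.Prime] (χ : MulChar (ZMod p) ℂ) (A : Finset (ZMod p))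
    (ex : ZMod p → ℕ) (g : (ZMod p)[X]) : wbL p χ A ex g = ∏ a ∈ A, χ (g.eval a) ^ ex a := rfl

theorem wb_S_eq (p : ℕ) [Fact p.Prime] (χ : MulChar (ZMod p) ℂ) (A : Finset (ZMod p))
    (ex : ZMod p → ℕ) (n j : ℕ) (hj : j ∈ Finset.Icc 1 n) :
    wbS p χ A ex j = ∑ d ∈ Finset.Icc 1 n, ∑ P ∈ wbI (ZMod p) d,
      if d ∣ j then (d : ℂ) * wbL p χ A ex P ^ (j / d) else 0 := by
  classical
  obtain ⟨hj1, hjn⟩ := Finset.mem_Icc.mp hj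
  have hj0 : j ≠ 0 := by omega
  have hfr : Module.finrank (ZMod p) (GaloisField p j) = j := GaloisField.finrank p hj0
  have h1 : ∀ x : GaloisField p j, (∏ a ∈ A,
      χ (Algebra.norm (ZMod p) (algebraMap (ZMod p) (GaloisField p j) a - x)) ^ ex a)
      = wbL p χ A ex (minpoly (ZMod p) x) ^ (j / (minpoly (ZMod p) x).natDegree) := by
    intro x
    rw [wbL_apply, ← Finset.prod_pow]
    refine Finset.prod_congr rfl fun a _ => ?_
    rw [wb_norm_sub, hfr, map_pow, ← pow_mul, ← pow_mul, mul_comm]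
  have hdeg : ∀ x : GaloisField p j, (minpoly (ZMod p) x).natDegree ∣ j := by
    intro x
    have hx : IsIntegral (ZMod p) x := IsIntegral.of_finite _ x
    have h2 := IntermediateField.adjoin.finrank hx
    rw [← h2]
    conv_rhs => rw [← hfr]
    exact Dvd.intro _ (Module.finrank_mul_finrank (ZMod p) (IntermediateField.adjoin (ZMod p) {x})
      (GaloisField p j))
  rw [wbS, Finset.sum_congr rfl (fun x _ => h1 x)]
  rw [← Finset.sum_fiberwise_of_maps_to (s := Finset.univ) (t := Finset.Icc 1 n)
    (g := fun x : GaloisField p j => (minpoly (ZMod p) x).natDegree)]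
  swap
  · intro x _
    rw [Finset.mem_Icc]
    have hx : IsIntegral (ZMod p) x := IsIntegral.of_finite _ x
    exact ⟨minpoly.natDegree_pos hx, (Nat.le_of_dvd hj1 (hdeg x)).trans hjn⟩
  refine Finset.sum_congr rfl fun d hd => ?_
  rw [← Finset.sum_fiberwise_of_maps_to (t := wbI (ZMod p) d)
    (g := fun x : GaloisField p j => minpoly (ZMod p) x)]
  swap
  · intro x hx
    have hxi : IsIntegral (ZMod p) x := IsIntegral.of_finite _ x
    exact mem_wbI.mpr ⟨minpoly.monic hxi, (Finset.mem_filter.mp hx).2, minpoly.irreducible hxi⟩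
  refine Finset.sum_congr rfl fun P hP => ?_
  obtain ⟨hP1, hP2, hP3⟩ := mem_wbI.mp hP
  split_ifs with hdj
  · have h3 : ((Finset.univ.filter (fun x : GaloisField p j =>
        (minpoly (ZMod p) x).natDegree = d)).filter (fun x => minpoly (ZMod p) x = P))
        = Finset.univ.filter (fun x : GaloisField p j => minpoly (ZMod p) x = P) := by
      ext x
      simp only [Finset.mem_filter, Finset.mem_univ, true_and, and_iff_right_iff_imp]
      rintro rfl; exact hP2
    rw [h3]
    have h4 : ∀ x ∈ Finset.univ.filter (fun x : GaloisField p j => minpoly (ZMod p) x = P),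
        wbL p χ A ex (minpoly (ZMod p) x) ^ (j / (minpoly (ZMod p) x).natDegree)
          = wbL p χ A ex P ^ (j / d) := by
      intro x hx
      rw [(Finset.mem_filter.mp hx).2, hP2]
    rw [Finset.sum_congr rfl h4, Finset.sum_const, wb_fiber p j d hj0 hdj P hP, nsmul_eq_mul]
  · apply Finset.sum_eq_zero
    intro x hx
    rw [Finset.mem_filter, Finset.mem_filter] at hx
    exact absurd (hx.1.2 ▸ hdeg x) hdj

end LemmaC
section Vanish
open Polynomial

theorem wbc_zero (p : ℕ) [Fact p.Prime] (L : (ZMod p)[X] →* ℂ) : wbc L 0 = 1 := by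
  have h : wbM (ZMod p) 0 = {1} := by
    ext g
    rw [mem_wbM, Finset.mem_singleton]
    constructor
    · rintro ⟨h1, h2⟩; exact h1.natDegree_eq_zero.mp h2
    · rintro rfl; exact ⟨monic_one, natDegree_one⟩
  rw [wbc, h, Finset.sum_singleton, map_one L]

theorem wbc_one (p : ℕ) [Fact p.Prime] (L : (ZMod p)[X] →* ℂ) :
    wbc L 1 = ∑ x : ZMod p, L (X - C x) := by
  rw [wbc]
  symm
  refine Finset.sum_bij (fun x _ => X - C x) ?_ ?_ ?_ ?_
  · intro x _
    exact mem_wbM.mpr ⟨monic_X_sub_C x, natDegree_X_sub_C x⟩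
  · intro x _ y _ h
    exact C_injective (sub_right_injective h)
  · intro g hg
    obtain ⟨h1, h2⟩ := mem_wbM.mp hg
    refine ⟨- g.coeff 0, Finset.mem_univ _, ?_⟩
    have := h1.as_sum
    rw [h2] at this
    rw [this]
    simp
  · intro _ _; rfl

theorem wbc_eq_zero (p : ℕ) [Fact p.Prime] (l : ℕ) (χ : MulChar (ZMod p) ℂ)
    (hχl : χ ^ l = 1) (hχ1 : χ ≠ 1) (A : Finset (ZMod p)) (hA : A.Nonempty)
    (ex : ZMod p → ℕ) (hex : ∀ a ∈ A, Nat.Coprime (ex a) l) (n : ℕ) (hn : A.card ≤ n) :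
    wbc (wbL p χ A ex) n = 0 := by
  classical
  obtain ⟨a0, ha0⟩ := hA
  obtain ⟨b, hb⟩ : ∃ b : (ZMod p)ˣ, χ b ≠ 1 := MulChar.ne_one_iff.mp hχ1
  have hbe : χ b ^ ex a0 ≠ 1 := by
    intro h
    have h2 : χ b ^ l = 1 := by
      rw [← MulChar.pow_apply_coe, hχl, MulChar.one_apply_coe]
    have h3 := pow_gcd_eq_one.mpr ⟨h, h2⟩
    rw [hex a0 ha0, pow_one] at h3
    exact hb h3
  set B := Lagrange.basis A id a0 with hB
  have hBdeg : B.natDegree < n := by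
    have h1 : B.degree = ((A.card - 1 : ℕ) : WithBot ℕ) :=
      Lagrange.degree_basis (Function.injective_id.injOn) ha0
    have h2 := natDegree_eq_of_degree_eq_some h1
    have : 0 < A.card := Finset.card_pos.mpr ⟨a0, ha0⟩
    omega
  have hB1 : B.eval a0 = 1 := by
    have := Lagrange.eval_basis_self (v := id) (s := A) (Function.injective_id.injOn) ha0
    simpa using this
  have hB0 : ∀ a ∈ A, a ≠ a0 → B.eval a = 0 := by
    intro a ha hne
    have := Lagrange.eval_basis_of_ne (v := id) (s := A) (i := a0) (j := a) hne.symm ha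
    simpa using this
  let φ : (ZMod p)[X] → (ZMod p)[X] := fun g => g + C (((b : ZMod p) - 1) * g.eval a0) * B
  have hev0 : ∀ g, (φ g).eval a0 = b * g.eval a0 := by
    intro g; simp only [φ, eval_add, eval_mul, eval_C, hB1]; ring
  have heva : ∀ g, ∀ a ∈ A, a ≠ a0 → (φ g).eval a = g.eval a := by
    intro g a ha hne; simp only [φ, eval_add, eval_mul, eval_C, hB0 a ha hne]; ring
  have hinj : Function.Injective φ := by
    intro g h hgh
    have h1 : g.eval a0 = h.eval a0 := by
      have := congrArg (eval a0) hgh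
      rw [hev0, hev0] at this
      exact b.isUnit.mul_left_cancel this
    simp only [φ, h1] at hgh
    exact add_right_cancel hgh
  have hmaps : ∀ g ∈ wbM (ZMod p) n, φ g ∈ wbM (ZMod p) n := by
    intro g hg
    obtain ⟨h1, h2⟩ := mem_wbM.mp hg
    have hlt : (C (((b : ZMod p) - 1) * g.eval a0) * B).natDegree < g.natDegree := by
      rw [h2]; exact lt_of_le_of_lt (natDegree_C_mul_le _ _) hBdeg
    have hlt' := degree_lt_degree hlt
    exact mem_wbM.mpr ⟨h1.add_of_left hlt', (natDegree_add_eq_left_of_natDegree_lt hlt).trans h2⟩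
  have himg : (wbM (ZMod p) n).image φ = wbM (ZMod p) n := by
    apply Finset.eq_of_subset_of_card_le
    · intro g hg
      obtain ⟨h, hh, rfl⟩ := Finset.mem_image.mp hg
      exact hmaps h hh
    · rw [Finset.card_image_of_injective _ hinj]
  have hL : ∀ g, wbL p χ A ex (φ g) = χ b ^ ex a0 * wbL p χ A ex g := by
    intro g
    rw [wbL_apply, wbL_apply, ← Finset.mul_prod_erase A _ ha0, ← Finset.mul_prod_erase A _ ha0,
      hev0, map_mul, mul_pow, mul_assoc]
    congr 2
    refine Finset.prod_congr rfl fun a ha => ?_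
    rw [heva g a (Finset.mem_of_mem_erase ha) (Finset.ne_of_mem_erase ha)]
  have key : wbc (wbL p χ A ex) n = χ b ^ ex a0 * wbc (wbL p χ A ex) n := by
    conv_lhs => rw [wbc, ← himg, Finset.sum_image (fun _ _ _ _ h => hinj h)]
    rw [wbc, Finset.mul_sum]
    exact Finset.sum_congr rfl fun g _ => hL g
  have h5 : (χ b ^ ex a0 - 1) * wbc (wbL p χ A ex) n = 0 := by linear_combination -key
  rcases mul_eq_zero.mp h5 with h | h
  · exact absurd (sub_eq_zero.mp h) hbe
  · exact h

end Vanish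
section Analysis
open Polynomial Filter Topology

theorem wb_no_root (P : ℂ[X]) (S : ℕ → ℂ) (K0 Q : ℝ) (hQ : 0 < Q) (hP0 : P.eval 0 = 1)
    (hrec : ∀ n : ℕ, (n : ℂ) * P.coeff n = ∑ ij ∈ Finset.HasAntidiagonal.antidiagonal n, S ij.1 * P.coeff ij.2)
    (hb : ∀ n : ℕ, ‖S n‖ ≤ K0 * Q ^ n) (T0 : ℂ) (hT0 : P.IsRoot T0) : 1 ≤ Q * ‖T0‖ := by
  by_contra hlt
  push Not at hlt
  have hK0 : 0 ≤ K0 := by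
    have := hb 0
    rw [pow_zero, mul_one] at this
    exact (norm_nonneg _).trans this
  obtain ⟨ρ, hρ1, hρ2⟩ := exists_between hlt
  have hρ0 : 0 ≤ ρ := (by positivity : 0 ≤ Q * ‖T0‖).trans hρ1.le
  let s : ℂ → ℂ := fun z => ∑' j, S j * z ^ j
  have hterm : ∀ z : ℂ, Q * ‖z‖ ≤ ρ → ∀ j, ‖S j * z ^ j‖ ≤ K0 * ρ ^ j := by
    intro z hz j
    rw [norm_mul, norm_pow]
    calc ‖S j‖ * ‖z‖ ^ j ≤ (K0 * Q ^ j) * ‖z‖ ^ j := by gcongr; exact hb j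
      _ = K0 * (Q * ‖z‖) ^ j := by rw [mul_pow]; ring
      _ ≤ K0 * ρ ^ j := by gcongr
  have hgeo : Summable (fun j => K0 * ρ ^ j) := (summable_geometric_of_lt_one hρ0 hρ2).mul_left K0
  have hsumm : ∀ z : ℂ, Q * ‖z‖ ≤ ρ → Summable (fun j => ‖S j * z ^ j‖) := fun z hz =>
    Summable.of_nonneg_of_le (fun _ => norm_nonneg _) (hterm z hz) hgeo
  have hbd : ∀ z : ℂ, Q * ‖z‖ ≤ ρ → ‖s z‖ ≤ ∑' j, K0 * ρ ^ j := by
    intro z hz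
    refine (norm_tsum_le_tsum_norm (hsumm z hz)).trans ?_
    exact (hsumm z hz).tsum_le_tsum (hterm z hz) hgeo
  have hfin : ∀ (f : ℕ → ℂ), (∀ n, P.natDegree < n → f n = 0) →
      ∑' n, f n = ∑ n ∈ Finset.range (P.natDegree + 1), f n := by
    intro f hf
    apply tsum_eq_sum
    intro n hn
    exact hf n (by simpa using hn)
  have hid : ∀ z : ℂ, Q * ‖z‖ ≤ ρ → z * P.derivative.eval z = P.eval z * s z := by
    intro z hz
    have h1 : P.eval z = ∑' n, P.coeff n * z ^ n := by
      rw [eval_eq_sum_range, hfin]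
      intro n hn; rw [coeff_eq_zero_of_natDegree_lt hn, zero_mul]
    have h1s : Summable (fun n => ‖P.coeff n * z ^ n‖) := by
      apply summable_of_ne_finset_zero (s := Finset.range (P.natDegree + 1))
      intro n hn
      rw [coeff_eq_zero_of_natDegree_lt (by simpa using hn), zero_mul, norm_zero]
    have h2 : z * P.derivative.eval z = ∑' n : ℕ, (n : ℂ) * P.coeff n * z ^ n := by
      rw [hfin]
      · rw [derivative_eval, Polynomial.sum_over_range _ (by simp), Finset.mul_sum]
        refine Finset.sum_congr rfl fun n _ => ?_
        rcases n with _ | n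
        · simp
        · rw [Nat.add_sub_cancel, pow_succ]; ring
      · intro n hn; rw [coeff_eq_zero_of_natDegree_lt hn]; ring
    rw [h1, h2]
    show _ = _ * ∑' j, S j * z ^ j
    rw [mul_comm (∑' n, P.coeff n * z ^ n),
      tsum_mul_tsum_eq_tsum_sum_antidiagonal_of_summable_norm (hsumm z hz) h1s]
    refine tsum_congr fun n => ?_
    rw [hrec n, Finset.sum_mul]
    refine Finset.sum_congr rfl fun ij hij => ?_
    rw [← Finset.HasAntidiagonal.mem_antidiagonal.mp hij, pow_add]; ring
  have hP : P ≠ 0 := by rintro rfl; simp at hP0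
  obtain ⟨R, hR, hR0⟩ := exists_eq_pow_rootMultiplicity_mul_and_not_dvd P hP T0
  set μ := P.rootMultiplicity T0 with hμ
  have hμ1 : 0 < μ := (rootMultiplicity_pos hP).mpr hT0
  obtain ⟨m, hm⟩ : ∃ m, μ = m + 1 := ⟨μ - 1, by omega⟩
  have hRT : R.eval T0 ≠ 0 := by
    intro h; exact hR0 (dvd_iff_isRoot.mpr h)
  have hT00 : T0 ≠ 0 := by
    rintro rfl
    rw [IsRoot.def, hP0] at hT0
    exact one_ne_zero hT0
  have hkey : ∀ z : ℂ, Q * ‖z‖ ≤ ρ → z ≠ T0 →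
      (z - T0) * R.eval z * s z - (z - T0) * (z * R.derivative.eval z) = μ * z * R.eval z := by
    intro z hz hne
    have h := hid z hz
    have hd : P.derivative.eval z = μ * (z - T0) ^ m * R.eval z + (z - T0) ^ (m + 1) * R.derivative.eval z := by
      conv_lhs => rw [hR, hm]
      rw [derivative_mul, derivative_X_sub_C_pow, hm]
      simp
    have he : P.eval z = (z - T0) ^ (m + 1) * R.eval z := by
      conv_lhs => rw [hR, hm]
      simp
    rw [hd, he] at h
    have hz0 : (z - T0) ^ m ≠ 0 := pow_ne_zero _ (sub_ne_zero.mpr hne)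
    apply mul_left_cancel₀ hz0
    rw [pow_succ] at h
    linear_combination -h
  have hnear : ∀ᶠ z in 𝓝[≠] T0, Q * ‖z‖ ≤ ρ := by
    apply eventually_nhdsWithin_of_eventually_nhds
    have : Continuous (fun z : ℂ => Q * ‖z‖) := by fun_prop
    exact (this.tendsto T0).eventually (eventually_le_nhds hρ1)
  have hlim1 : Tendsto (fun z => (z - T0) * R.eval z * s z - (z - T0) * (z * R.derivative.eval z))
      (𝓝[≠] T0) (𝓝 (0 - 0)) := by
    apply Tendsto.sub
    · apply Tendsto.zero_mul_isBoundedUnder_le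
      · have hc : Continuous (fun z => (z - T0) * R.eval z) := by fun_prop
        have := (hc.tendsto T0).mono_left (nhdsWithin_le_nhds (s := {T0}ᶜ))
        simpa using this
      · refine ⟨∑' j, K0 * ρ ^ j, ?_⟩
        rw [eventually_map]
        filter_upwards [hnear] with z hz
        exact hbd z hz
    · have hc : Continuous (fun z => (z - T0) * (z * R.derivative.eval z)) := by fun_prop
      have := (hc.tendsto T0).mono_left (nhdsWithin_le_nhds (s := {T0}ᶜ))
      simpa using this
  have hlim2 : Tendsto (fun z => (z - T0) * R.eval z * s z - (z - T0) * (z * R.derivative.eval z))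
      (𝓝[≠] T0) (𝓝 (μ * T0 * R.eval T0)) := by
    have hc : Continuous (fun z => μ * z * R.eval z) := by fun_prop
    have := (hc.tendsto T0).mono_left (nhdsWithin_le_nhds (s := {T0}ᶜ))
    refine this.congr' ?_
    filter_upwards [hnear, self_mem_nhdsWithin] with z hz hne
    exact (hkey z hz hne).symm
  have := tendsto_nhds_unique hlim1 hlim2
  rw [sub_zero] at this
  have h6 : (μ : ℂ) ≠ 0 := by exact_mod_cast hμ1.ne'
  exact mul_ne_zero (mul_ne_zero h6 hT00) hRT this.symm

theorem wb_c1_bound (c S : ℕ → ℂ) (d : ℕ) (hd : 1 ≤ d) (hc0 : c 0 = 1) (hc : ∀ n, d ≤ n → c n = 0)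
    (hrec : ∀ n : ℕ, (n : ℂ) * c n = ∑ j ∈ Finset.Icc 1 n, S j * c (n - j))
    (K0 Q : ℝ) (hQ : 0 < Q) (hb : ∀ n : ℕ, n ≠ 0 → ‖S n‖ ≤ K0 * Q ^ n) :
    ‖c 1‖ ≤ ((d : ℝ) - 1) * Q := by
  let P : ℂ[X] := ∑ i ∈ Finset.range d, C (c i) * X ^ i
  have hcoef : ∀ n, P.coeff n = c n := by
    intro n
    simp only [P, finsetSum_coeff, coeff_C_mul_X_pow]
    rw [Finset.sum_ite_eq]
    split_ifs with h
    · rfl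
    · exact (hc n (by simpa using h)).symm
  have hP0 : P.eval 0 = 1 := by rw [← coeff_zero_eq_eval_zero, hcoef, hc0]
  have hP : P ≠ 0 := by intro h; rw [h] at hP0; simp at hP0
  have hdeg : P.natDegree ≤ d - 1 := by
    rw [natDegree_le_iff_coeff_eq_zero]
    intro n hn
    rw [hcoef, hc n (by omega)]
  let S' : ℕ → ℂ := fun n => if n = 0 then 0 else S n
  have hK0 : 0 ≤ K0 := by
    have := (norm_nonneg _).trans (hb 1 one_ne_zero)
    rw [pow_one] at this
    exact nonneg_of_mul_nonneg_left this hQ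
  have hroot := wb_no_root P S' K0 Q hQ hP0 (by
    intro n
    rw [hcoef, hrec, Finset.Nat.sum_antidiagonal_eq_sum_range_succ (fun i j => S' i * P.coeff j)]
    refine (Finset.sum_subset_zero_on_sdiff ?_ ?_ ?_)
    · intro j hj
      rw [Finset.mem_Icc] at hj
      rw [Finset.mem_range]; omega
    · intro j hj
      rw [Finset.mem_sdiff, Finset.mem_Icc, Finset.mem_range] at hj
      have : j = 0 := by omega
      simp [S', this]
    · intro j hj
      rw [Finset.mem_Icc] at hj
      have : j ≠ 0 := by omega
      simp [S', this, hcoef]) (by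
    intro n
    simp only [S']
    split_ifs with h
    · rw [norm_zero]; positivity
    · exact hb n h)
  have hspl : P.Splits := IsAlgClosed.splits P
  have h0 : P.eval 0 ≠ 0 := by rw [hP0]; exact one_ne_zero
  have hlog := hspl.eval_derivative_div_eval_of_ne_zero h0
  rw [hP0, div_one, ← coeff_zero_eq_eval_zero, coeff_derivative, hcoef] at hlog
  have hc1 : c 1 = (P.roots.map fun z => 1 / (0 - z)).sum := by
    rw [← hlog]; simp
  rw [hc1]
  have h1 : ‖(P.roots.map fun z => 1 / (0 - z)).sum‖ ≤ ((P.roots.map fun z => 1 / (0 - z)).map norm).sum :=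
    norm_multiset_sum_le _
  refine h1.trans ?_
  rw [Multiset.map_map]
  have h2 : ((P.roots.map (norm ∘ fun z => 1 / (0 - z))).sum : ℝ) ≤ (Multiset.card (P.roots.map (norm ∘ fun z => 1 / (0 - z)))) • Q := by
    apply Multiset.sum_le_card_nsmul
    intro x hx
    obtain ⟨z, hz, rfl⟩ := Multiset.mem_map.mp hx
    have hz1 := hroot z ((mem_roots hP).mp hz)
    have hzpos : 0 < ‖z‖ := by
      by_contra h
      have : ‖z‖ = 0 := le_antisymm (not_lt.mp h) (norm_nonneg _)
      rw [this] at hz1; linarith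
    simp only [Function.comp_apply, zero_sub, norm_div, norm_one, norm_neg]
    rw [div_le_iff₀ hzpos]; exact hz1
  refine h2.trans ?_
  rw [Multiset.card_map, nsmul_eq_mul]
  have h3 : Multiset.card P.roots ≤ d - 1 := (card_roots' P).trans hdeg
  have h4 : (Multiset.card P.roots : ℝ) ≤ (d : ℝ) - 1 := by
    have : ((Multiset.card P.roots : ℕ) : ℝ) ≤ ((d - 1 : ℕ) : ℝ) := by exact_mod_cast h3
    rwa [Nat.cast_sub hd, Nat.cast_one] at this
  gcongr

end Analysis
section Weil
open Polynomial

theorem wb_weil (p : ℕ) [Fact p.Prime] (l : ℕ) (hl : l.Prime) (χ : MulChar (ZMod p) ℂ)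
    (hχl : χ ^ l = 1) (hχ1 : χ ≠ 1) (A : Finset (ZMod p)) (hA : A.Nonempty)
    (ex : ZMod p → ℕ) (hex : ∀ a ∈ A, Nat.Coprime (ex a) l) :
    ‖∑ x : ZMod p, ∏ a ∈ A, χ (a - x) ^ ex a‖ ≤ ((A.card : ℝ) - 1) * Real.sqrt p := by
  obtain ⟨K0, hK0⟩ := wb_S_bound p l hl χ hχl hχ1 A hA ex hex
  have hp : (0 : ℝ) < p := by exact_mod_cast (Fact.out : p.Prime).pos
  have h := wb_c1_bound (wbc (wbL p χ A ex)) (wbS p χ A ex) A.card (Finset.card_pos.mpr hA)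
    (wbc_zero p _) (fun n hn => wbc_eq_zero p l χ hχl hχ1 A hA ex hex n hn)
    (fun n => wb_newton (wbL p χ A ex) (wbS p χ A ex) n
      (fun j hj => wb_S_eq p χ A ex n j hj)) K0 (Real.sqrt p) (Real.sqrt_pos.mpr hp) hK0
  rw [wbc_one] at h
  simpa [wbL_apply] using h

theorem wb_weil' (p : ℕ) [Fact p.Prime] (l : ℕ) (hl : l.Prime) (χ : MulChar (ZMod p) ℂ)
    (hχl : χ ^ l = 1) (hχ1 : χ ≠ 1) (w : ℕ) (hw : w ≤ p) (B : Finset ℕ) (hB : B.Nonempty)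
    (hBw : B ⊆ Finset.range w) (e : ℕ → ℕ) (he : ∀ m, Nat.Coprime (e m) l) :
    ‖∑ x : ZMod p, ∏ m ∈ B, χ (x + m) ^ e m‖ ≤ ((w : ℝ) - 1) * Real.sqrt p := by
  classical
  have hval : ∀ m ∈ B, ((m : ℕ) : ZMod p).val = m := fun m hm =>
    ZMod.val_cast_of_lt (lt_of_lt_of_le (Finset.mem_range.mp (hBw hm)) hw)
  have hinj : Set.InjOn (fun m : ℕ => (m : ZMod p)) B := by
    intro a ha b hb hab
    have := congrArg ZMod.val hab
    rwa [hval a ha, hval b hb] at this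
  have h := wb_weil p l hl χ hχl hχ1 (B.image (fun m : ℕ => (m : ZMod p))) (hB.image _)
    (fun a => e a.val) (fun a _ => he _)
  have h1 : ∑ x : ZMod p, ∏ m ∈ B, χ (x + m) ^ e m =
      ∑ x : ZMod p, ∏ a ∈ B.image (fun m : ℕ => (m : ZMod p)), χ (a - x) ^ e a.val := by
    rw [← Equiv.sum_comp (Equiv.neg (ZMod p))]
    refine Finset.sum_congr rfl fun x _ => ?_
    rw [Finset.prod_image hinj]
    refine Finset.prod_congr rfl fun m hm => ?_
    rw [hval m hm, Equiv.neg_apply]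
    congr 2; ring
  rw [h1]
  refine h.trans ?_
  have h2 : (B.image (fun m : ℕ => (m : ZMod p))).card ≤ w := by
    refine Finset.card_image_le.trans ?_
    simpa using Finset.card_le_card hBw
  have h3 : ((B.image (fun m : ℕ => (m : ZMod p))).card : ℝ) ≤ w := by exact_mod_cast h2
  gcongr

theorem wb_factor (p : ℕ) [Fact p.Prime] (l : ℕ) (hl : l.Prime) (χ : MulChar (ZMod p) ℂ)
    (hχl : χ ^ l = 1) (y : ZMod p) :
    ∃ r : ℝ, 0 ≤ r ∧ (2 + (χ y + χ y ^ (l - 1)) = (r : ℂ)) ∧ (χ y = 1 → r = 4) := by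
  have hl2 := hl.two_le
  by_cases hy : y = 0
  · refine ⟨2, by norm_num, ?_, ?_⟩
    · subst hy
      rw [MulChar.map_zero, zero_pow (by omega)]
      norm_num
    · intro h; rw [hy, MulChar.map_zero] at h; exact absurd h (by norm_num)
  · have hu : IsUnit y := Ne.isUnit hy
    obtain ⟨v, rfl⟩ := hu
    have h1 : χ v ^ l = 1 := by rw [← MulChar.pow_apply_coe, hχl, MulChar.one_apply_coe]
    have hn : ‖χ v‖ = 1 := Complex.norm_eq_one_of_pow_eq_one h1 hl.ne_zero
    have h0 : χ v ≠ 0 := by intro h; rw [h, norm_zero] at hn; exact zero_ne_one hn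
    have h2 : χ v ^ (l - 1) = (starRingEnd ℂ) (χ v) := by
      rw [← Complex.inv_eq_conj hn]
      apply eq_inv_of_mul_eq_one_left
      rw [← pow_succ, Nat.sub_add_cancel (by omega), h1]
    refine ⟨2 + 2 * (χ v).re, ?_, ?_, ?_⟩
    · have := (abs_le.mp (Complex.abs_re_le_norm (χ v))).1
      rw [hn] at this; linarith
    · rw [h2, Complex.add_conj]; push_cast; ring
    · intro h; rw [h]; norm_num

theorem wb_moment (p : ℕ) [Fact p.Prime] (l : ℕ) (hl : l.Prime) (χ : MulChar (ZMod p) ℂ)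
    (hχl : χ ^ l = 1) (hχ1 : χ ≠ 1) (w : ℕ) (hw1 : 1 ≤ w) (hw : w ≤ p) (T : Finset (ZMod p))
    (hT : ∀ x ∈ T, ∀ m < w, χ (x + m) = 1) :
    (T.card : ℝ) * 4 ^ w ≤ 2 ^ w * p + 4 ^ w * (((w : ℝ) - 1) * Real.sqrt p) := by
  classical
  choose r hr0 hr1 hr2 using wb_factor p l hl χ hχl
  have hl2 := hl.two_le
  have hlow : (T.card : ℝ) * 4 ^ w ≤ ∑ x : ZMod p, ∏ m ∈ Finset.range w, r (x + m) := by
    calc (T.card : ℝ) * 4 ^ w = ∑ x ∈ T, ∏ m ∈ Finset.range w, r (x + m) := by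
          rw [← nsmul_eq_mul, ← Finset.sum_const]
          refine Finset.sum_congr rfl fun x hx => ?_
          rw [Finset.prod_congr rfl (fun m hm => hr2 _ (hT x hx m (Finset.mem_range.mp hm)))]
          simp
      _ ≤ _ := Finset.sum_le_sum_of_subset_of_nonneg (Finset.subset_univ _)
          (fun x _ _ => Finset.prod_nonneg fun m _ => hr0 _)
  refine hlow.trans ?_
  have hcast : ((∑ x : ZMod p, ∏ m ∈ Finset.range w, r (x + m) : ℝ) : ℂ)
      = ∑ t ∈ (Finset.range w).powerset, 2 ^ t.card *
        ∑ t' ∈ (Finset.range w \ t).powerset, ∑ x : ZMod p,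
          ∏ m ∈ Finset.range w \ t, χ (x + m) ^ (if m ∈ t' then 1 else l - 1) := by
    push_cast
    have : ∀ x : ZMod p, (∏ m ∈ Finset.range w, ((r (x + m) : ℝ) : ℂ)) =
        ∑ t ∈ (Finset.range w).powerset, 2 ^ t.card *
        ∑ t' ∈ (Finset.range w \ t).powerset, 
          ∏ m ∈ Finset.range w \ t, χ (x + m) ^ (if m ∈ t' then 1 else l - 1) := by
      intro x
      rw [Finset.prod_congr rfl (fun (m : ℕ) _ => (hr1 (x + m)).symm), Finset.prod_add]
      refine Finset.sum_congr rfl fun t _ => ?_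
      rw [Finset.prod_const, Finset.prod_add]
      congr 1
      refine Finset.sum_congr rfl fun t' ht' => ?_
      rw [Finset.mem_powerset] at ht'
      rw [mul_comm, ← Finset.prod_sdiff ht']
      congr 1
      · refine Finset.prod_congr rfl fun m hm => ?_
        rw [if_neg (Finset.mem_sdiff.mp hm).2]
      · refine Finset.prod_congr rfl fun m hm => ?_
        rw [if_pos hm, pow_one]
    rw [Finset.sum_congr rfl (fun x _ => this x), Finset.sum_comm]
    refine Finset.sum_congr rfl fun t _ => ?_
    rw [← Finset.mul_sum, Finset.sum_comm]
  have hnn : 0 ≤ ∑ x : ZMod p, ∏ m ∈ Finset.range w, r (x + m) :=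
    Finset.sum_nonneg fun x _ => Finset.prod_nonneg fun m _ => hr0 _
  have hE : 0 ≤ ((w : ℝ) - 1) * Real.sqrt p := by
    have : (1 : ℝ) ≤ w := by exact_mod_cast hw1
    exact mul_nonneg (by linarith) (Real.sqrt_nonneg _)
  have hin : ∀ t ∈ (Finset.range w).powerset, ‖(2 : ℂ) ^ t.card *
        ∑ t' ∈ (Finset.range w \ t).powerset, ∑ x : ZMod p,
          ∏ m ∈ Finset.range w \ t, χ (x + m) ^ (if m ∈ t' then 1 else l - 1)‖
      ≤ 2 ^ w * (((w : ℝ) - 1) * Real.sqrt p) + if t = Finset.range w then 2 ^ w * (p : ℝ) else 0 := by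
    intro t ht
    rw [Finset.mem_powerset] at ht
    split_ifs with h
    · subst h
      simp only [Finset.sdiff_self, Finset.powerset_empty, Finset.sum_singleton, Finset.prod_empty,
        Finset.card_range, Finset.sum_const, Finset.card_univ, ZMod.card, norm_mul, norm_pow]
      simp
      positivity
    · have hne : (Finset.range w \ t).Nonempty := by
        rw [Finset.sdiff_nonempty]
        intro h2; exact h (Finset.Subset.antisymm ht h2)
      rw [add_zero, norm_mul, norm_pow, RCLike.norm_ofNat]
      have hb : ‖∑ t' ∈ (Finset.range w \ t).powerset, ∑ x : ZMod p,
          ∏ m ∈ Finset.range w \ t, χ (x + m) ^ (if m ∈ t' then 1 else l - 1)‖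
          ≤ ((Finset.range w \ t).powerset).card • (((w : ℝ) - 1) * Real.sqrt p) := by
        refine (norm_sum_le _ _).trans (Finset.sum_le_card_nsmul _ _ _ fun t' _ => ?_)
        refine wb_weil' p l hl χ hχl hχ1 w hw _ hne Finset.sdiff_subset
          (fun m => if m ∈ t' then 1 else l - 1) (fun m => ?_)
        split_ifs
        · exact Nat.coprime_one_left l
        · refine (Nat.coprime_self_sub_left (by omega)).mpr (Nat.coprime_one_left l)
      rw [Finset.card_powerset, Finset.card_sdiff_of_subset ht, Finset.card_range, nsmul_eq_mul] at hb
      have hc : t.card ≤ w := by simpa using Finset.card_le_card ht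
      calc (2 : ℝ) ^ t.card * _ ≤ 2 ^ t.card * (((2 ^ (w - t.card) : ℕ) : ℝ) * (((w : ℝ) - 1) * Real.sqrt p)) := by
            gcongr
        _ = 2 ^ w * (((w : ℝ) - 1) * Real.sqrt p) := by
            push_cast
            rw [← mul_assoc, ← pow_add, Nat.add_sub_cancel' hc]
  calc ∑ x : ZMod p, ∏ m ∈ Finset.range w, r (x + m)
      = ‖((∑ x : ZMod p, ∏ m ∈ Finset.range w, r (x + m) : ℝ) : ℂ)‖ := by
        rw [Complex.norm_real, Real.norm_of_nonneg hnn]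
    _ ≤ ∑ t ∈ (Finset.range w).powerset, (2 ^ w * (((w : ℝ) - 1) * Real.sqrt p) +
          if t = Finset.range w then 2 ^ w * (p : ℝ) else 0) := by
        rw [hcast]
        exact (norm_sum_le _ _).trans (Finset.sum_le_sum hin)
    _ = 2 ^ w * p + 4 ^ w * (((w : ℝ) - 1) * Real.sqrt p) := by
        rw [Finset.sum_add_distrib, Finset.sum_const, Finset.card_powerset, Finset.card_range,
          Finset.sum_ite_eq', if_pos (Finset.mem_powerset_self _), nsmul_eq_mul]
        have h4 : (4 : ℝ) ^ w = 2 ^ w * 2 ^ w := by rw [← mul_pow]; norm_num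
        rw [h4]; push_cast; ring

end Weil
section Counting

/-- the windows -/
def wbWin (p u H n w : ℕ) : Finset (Σ _ : ℕ, Σ _ : ℕ, ℕ) :=
  ((Finset.Ioc 0 n).filter (fun q => ¬ u ∣ q)).sigma fun q =>
    ((Finset.range q).filter (fun t => q.Coprime t)).sigma fun t =>
      Finset.Ico (p * t / q + 1) ((p * t + H) / q + 2 - 2 * w)

theorem mem_wbWin {p u H n w q t z : ℕ} (hw : 1 ≤ w) (h : (⟨q, t, z⟩ : Σ _ : ℕ, Σ _ : ℕ, ℕ) ∈ wbWin p u H n w) :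
    (0 < q ∧ q ≤ n ∧ ¬ u ∣ q) ∧ (t < q ∧ q.Coprime t) ∧ p * t < q * z ∧
      q * (z + (2 * w - 1)) ≤ p * t + H := by
  simp only [wbWin, Finset.mem_sigma, Finset.mem_filter, Finset.mem_Ioc, Finset.mem_range,
    Finset.mem_Ico] at h
  obtain ⟨⟨⟨hq0, hqn⟩, hqu⟩, ⟨htq, hco⟩, hz1, hz2⟩ := h
  refine ⟨⟨hq0, hqn, hqu⟩, ⟨htq, hco⟩, ?_, ?_⟩
  · have := (Nat.div_lt_iff_lt_mul hq0).mp (Nat.lt_of_succ_le hz1)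
    rwa [mul_comm z q] at this
  · have h2 : z + (2 * w - 1) ≤ (p * t + H) / q := by omega
    have := (Nat.le_div_iff_mul_le hq0).mp h2
    rwa [mul_comm q]

theorem wb_count (p : ℕ) [Fact p.Prime] (χ : MulChar (ZMod p) ℂ) (u : ℕ) (hu : u.Prime)
    (H n w : ℕ) (hw1 : 1 ≤ w) (hw : 2 * w ≤ u) (hnHp : n * H ≤ p) (hHp : H < p) (hnH : n ≤ H)
    (hres : ∀ m : ℕ, 1 ≤ m → m ≤ H → Nat.gcd m u = 1 → χ (m : ZMod p) = 1)
    (T : Finset (ZMod p)) (hT : ∀ x, (∀ m < w, χ (x + (m : ℕ)) = 1) → x ∈ T) :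
    (wbWin p u H n w).card ≤ 2 * T.card := by
  classical
  let f : (Σ _ : ℕ, Σ _ : ℕ, ℕ) → ZMod p := fun i => (i.2.2 : ZMod p)
  have hzp : ∀ q t z : ℕ, (⟨q, t, z⟩ : Σ _ : ℕ, Σ _ : ℕ, ℕ) ∈ wbWin p u H n w → z < p := by
    intro q t z h
    obtain ⟨⟨hq0, hqn, hqu⟩, ⟨htq, hco⟩, hz1, hz2⟩ := mem_wbWin hw1 h
    by_contra hge
    push Not at hge
    have h1 : q * p ≤ q * (z + (2 * w - 1)) := Nat.mul_le_mul_left _ (by omega)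
    have h2 : p * (t + 1) ≤ p * q := Nat.mul_le_mul_left _ htq
    nlinarith
  have hinj : Set.InjOn f (wbWin p u H n w) := by
    rintro ⟨q, t, z⟩ h ⟨q', t', z'⟩ h' hff
    have hz := hzp q t z h
    have hz' := hzp q' t' z' h'
    obtain ⟨⟨hq0, hqn, hqu⟩, ⟨htq, hco⟩, hz1, hz2⟩ := mem_wbWin hw1 h
    obtain ⟨⟨hq0', hqn', hqu'⟩, ⟨htq', hco'⟩, hz1', hz2'⟩ := mem_wbWin hw1 h'
    have hzz : z = z' := by
      have := congrArg ZMod.val hff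
      simp only [f] at this
      rwa [ZMod.val_cast_of_lt hz, ZMod.val_cast_of_lt hz'] at this
    subst hzz
    have e1 : q * z ≤ p * t + H := (Nat.mul_le_mul_left q (by omega)).trans hz2
    have e2 : q' * z ≤ p * t' + H := (Nat.mul_le_mul_left q' (by omega)).trans hz2'
    have hnp : (n : ℤ) * H ≤ p := by exact_mod_cast hnHp
    have hpp : (0 : ℤ) < p := by exact_mod_cast (Fact.out : p.Prime).pos
    zify at hz1 hz1' e1 e2
    obtain ⟨a, ha⟩ : ∃ a : ℤ, a = q * z - p * t := ⟨_, rfl⟩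
    obtain ⟨b, hb⟩ : ∃ b : ℤ, b = q' * z - p * t' := ⟨_, rfl⟩
    have hrel : (q' : ℤ) * a - q * b = p * ((q : ℤ) * t' - q' * t) := by rw [ha, hb]; ring
    have ha1 : 0 < a := by linarith
    have ha2 : a ≤ H := by linarith
    have hb1 : 0 < b := by linarith
    have hb2 : b ≤ H := by linarith
    have hqZ : (0 : ℤ) < q := by exact_mod_cast hq0
    have hqZ' : (0 : ℤ) < q' := by exact_mod_cast hq0'
    have hqnZ : (q : ℤ) ≤ n := by exact_mod_cast hqn
    have hqnZ' : (q' : ℤ) ≤ n := by exact_mod_cast hqn'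
    have b1 : (q' : ℤ) * a ≤ n * H := mul_le_mul hqnZ' ha2 ha1.le (by positivity)
    have b2 : (q : ℤ) * b ≤ n * H := mul_le_mul hqnZ hb2 hb1.le (by positivity)
    have b3 : 0 < (q' : ℤ) * a := mul_pos hqZ' ha1
    have b4 : 0 < (q : ℤ) * b := mul_pos hqZ hb1
    have hzero : (q : ℤ) * t' - q' * t = 0 := by
      have c1 : p * ((q : ℤ) * t' - q' * t) < p * 1 := by linarith
      have c2 : p * (-1) < p * ((q : ℤ) * t' - q' * t) := by linarith
      have := lt_of_mul_lt_mul_left c1 hpp.le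
      have := lt_of_mul_lt_mul_left c2 hpp.le
      omega
    have hzN : q * t' = q' * t := by
      have : (q : ℤ) * t' = q' * t := by linarith
      exact_mod_cast this
    have d1 : q ∣ q' := hco.dvd_of_dvd_mul_right (Dvd.intro _ hzN)
    have d2 : q' ∣ q := hco'.dvd_of_dvd_mul_right (Dvd.intro _ hzN.symm)
    have hqq : q = q' := Nat.dvd_antisymm d1 d2
    subst hqq
    have htt : t' = t := Nat.eq_of_mul_eq_mul_left hq0 hzN
    subst htt
    rfl
  have hsub : (wbWin p u H n w).image f ⊆ T ∪ T.image (fun x => x - (w : ZMod p)) := by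
    intro x hx
    obtain ⟨⟨q, t, z⟩, h, rfl⟩ := Finset.mem_image.mp hx
    obtain ⟨⟨hq0, hqn, hqu⟩, ⟨htq, hco⟩, hz1, hz2⟩ := mem_wbWin hw1 h
    have hcop : ∀ m, ¬ u ∣ m → Nat.gcd m u = 1 := fun m hm =>
      ((Nat.Prime.coprime_iff_not_dvd hu).mpr hm).symm
    have hχq : χ (q : ZMod p) = 1 := hres q hq0 (hqn.trans hnH) (hcop q hqu)
    have hgood : ∀ m < 2 * w, ¬ u ∣ (q * (z + m) - p * t) → χ ((z : ZMod p) + (m : ℕ)) = 1 := by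
      intro m hm hnd
      have e1 : q * (z + m) ≤ p * t + H := (Nat.mul_le_mul_left q (by omega)).trans hz2
      have e2 : p * t < q * (z + m) := lt_of_lt_of_le hz1 (Nat.mul_le_mul_left q (by omega))
      have h1 := hres (q * (z + m) - p * t) (by omega) (by omega) (hcop _ hnd)
      rw [Nat.cast_sub e2.le] at h1
      push_cast at h1
      rw [ZMod.natCast_self p, zero_mul, sub_zero, map_mul, hχq, one_mul] at h1
      exact h1
    rw [Finset.mem_union]
    by_cases hc : ∀ m < w, ¬ u ∣ (q * (z + m) - p * t)
    · left
      exact hT _ fun m hm => hgood m (by omega) (hc m hm)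
    · right
      push Not at hc
      obtain ⟨m1, hm1, hd1⟩ := hc
      rw [Finset.mem_image]
      refine ⟨(z : ZMod p) + (w : ZMod p), hT _ fun m hm => ?_, by simp [f]⟩
      have := hgood (w + m) (by omega) (by
        intro hd2
        have e1 : p * t < q * (z + m1) := lt_of_lt_of_le hz1 (Nat.mul_le_mul_left q (by omega))
        have h3 := Nat.dvd_sub hd2 hd1
        have h4 : q * (z + (w + m)) - p * t - (q * (z + m1) - p * t) = q * (w + m - m1) := by
          obtain ⟨k, hk⟩ : ∃ k, w + m = m1 + k := ⟨w + m - m1, by omega⟩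
          rw [hk, Nat.add_sub_cancel_left]
          have : q * (z + (m1 + k)) = q * (z + m1) + q * k := by ring
          omega
        rw [h4] at h3
        rcases (Nat.Prime.dvd_mul hu).mp h3 with h5 | h5
        · exact hqu h5
        · have := Nat.le_of_dvd (by omega) h5
          omega)
      push_cast at this
      rw [← this]; congr 1; ring
  have h1 : (wbWin p u H n w).card = ((wbWin p u H n w).image f).card :=
    (Finset.card_image_of_injOn hinj).symm
  rw [h1]
  refine (Finset.card_le_card hsub).trans ((Finset.card_union_le _ _).trans ?_)
  have := Finset.card_image_le (s := T) (f := fun x => x - (w : ZMod p))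
  omega

theorem wb_win_card (p u H n w : ℕ) :
    ∑ q ∈ (Finset.Ioc 0 n).filter (fun q => ¬ u ∣ q), (q.totient : ℝ) * ((H : ℝ) / q - 2 * w)
      ≤ ((wbWin p u H n w).card : ℝ) := by
  rw [wbWin, Finset.card_sigma]
  push_cast
  refine Finset.sum_le_sum fun q hq => ?_
  have hq0 : 0 < q := (Finset.mem_Ioc.mp (Finset.mem_filter.mp hq).1).1
  rw [Finset.card_sigma]
  push_cast
  rw [Nat.totient_eq_card_coprime, ← nsmul_eq_mul]
  apply Finset.card_nsmul_le_sum
  intro t _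
  rw [Nat.card_Ico]
  have hqR : (0 : ℝ) < q := by exact_mod_cast hq0
  have h1 : (p * t + H) / q + 1 ≤ ((p * t + H) / q + 2 - 2 * w - (p * t / q + 1)) + 2 * w + p * t / q := by
    omega
  have h1R : (((p * t + H) / q : ℕ) : ℝ) + 1 ≤
      (((p * t + H) / q + 2 - 2 * w - (p * t / q + 1) : ℕ) : ℝ) + 2 * w + ((p * t / q : ℕ) : ℝ) := by
    exact_mod_cast h1
  have h2 : (((p * t : ℕ) : ℝ) + H) / q < (((p * t + H) / q : ℕ) : ℝ) + 1 := by
    rw [div_lt_iff₀ hqR]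
    have := Nat.lt_mul_div_succ (p * t + H) hq0
    have h4 : ((p * t : ℕ) : ℝ) + H < q * ((((p * t + H) / q : ℕ) : ℝ) + 1) := by exact_mod_cast this
    linarith
  have h3 : ((p * t / q : ℕ) : ℝ) ≤ ((p * t : ℕ) : ℝ) / q := Nat.cast_div_le
  rw [add_div] at h2
  linarith

theorem wb_totient_sum (n : ℕ) (hn : 1 ≤ n) :
    ((n : ℝ) + 1) / 2 ≤ ∑ q ∈ Finset.Ioc 0 n, (q.totient : ℝ) / q := by
  have h1 : ∑ q ∈ Finset.Ioc 0 n, q.totient * (n / q) = ∑ m ∈ Finset.Ioc 0 n, m := by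
    have : ∀ m ∈ Finset.Ioc 0 n, m = ∑ q ∈ Finset.Ioc 0 n, if q ∣ m then q.totient else 0 := by
      intro m hm
      rw [Finset.mem_Ioc] at hm
      conv_lhs => rw [← Nat.sum_totient m]
      rw [← Finset.sum_filter]
      refine Finset.sum_congr ?_ fun _ _ => rfl
      ext q
      simp only [Nat.mem_divisors, Finset.mem_filter, Finset.mem_Ioc]
      constructor
      · rintro ⟨h, h0⟩
        exact ⟨⟨Nat.pos_of_dvd_of_pos h hm.1, (Nat.le_of_dvd hm.1 h).trans hm.2⟩, h⟩
      · rintro ⟨_, h⟩; exact ⟨h, by omega⟩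
    conv_rhs => rw [Finset.sum_congr rfl this, Finset.sum_comm]
    refine Finset.sum_congr rfl fun q _ => ?_
    rw [← Finset.sum_filter, Finset.sum_const, Nat.Ioc_filter_dvd_card_eq_div, smul_eq_mul, mul_comm]
  have h2 : (∑ m ∈ Finset.Ioc 0 n, m) * 2 = n * (n + 1) := by
    have := Finset.sum_range_id_mul_two (n + 1)
    rw [Nat.add_sub_cancel] at this
    rw [mul_comm n, ← this]
    congr 1
    apply Finset.sum_subset_zero_on_sdiff
    · intro m hm; rw [Finset.mem_Ioc] at hm; rw [Finset.mem_range]; omega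
    · intro m hm; rw [Finset.mem_sdiff, Finset.mem_Ioc, Finset.mem_range] at hm; omega
    · intros; rfl
  have hnR : (0 : ℝ) < n := by exact_mod_cast hn
  have h3 : ((∑ q ∈ Finset.Ioc 0 n, q.totient * (n / q) : ℕ) : ℝ)
      ≤ n * ∑ q ∈ Finset.Ioc 0 n, (q.totient : ℝ) / q := by
    push_cast
    rw [Finset.mul_sum]
    refine Finset.sum_le_sum fun q _ => ?_
    have : ((n / q : ℕ) : ℝ) ≤ (n : ℝ) / q := Nat.cast_div_le
    calc (q.totient : ℝ) * ((n / q : ℕ) : ℝ) ≤ q.totient * ((n : ℝ) / q) := by gcongr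
      _ = n * (q.totient / q) := by ring
  rw [h1] at h3
  have h4 : ((∑ m ∈ Finset.Ioc 0 n, m : ℕ) : ℝ) * 2 = n * (n + 1) := by exact_mod_cast h2
  have h5 : (n : ℝ) * (((n : ℝ) + 1) / 2) ≤ n * ∑ q ∈ Finset.Ioc 0 n, (q.totient : ℝ) / q := by
    linarith
  exact le_of_mul_le_mul_left h5 hnR

theorem wb_lower (u H n w : ℕ) (hn : 1 ≤ n) (hu : 0 < u) :
    ((n : ℝ) + 1) / 2 * (H - 2 * w * n) - H * (n / u)
    ≤ ∑ q ∈ (Finset.Ioc 0 n).filter (fun q => ¬ u ∣ q), (q.totient : ℝ) * ((H : ℝ) / q - 2 * w) := by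
  have hsplit := Finset.sum_filter_add_sum_filter_not (Finset.Ioc 0 n) (fun q => u ∣ q)
    (fun q => (q.totient : ℝ) * ((H : ℝ) / q - 2 * w))
  have h1 : ∑ q ∈ (Finset.Ioc 0 n).filter (fun q => u ∣ q), (q.totient : ℝ) * ((H : ℝ) / q - 2 * w)
      ≤ H * (n / u) := by
    calc _ ≤ ∑ q ∈ (Finset.Ioc 0 n).filter (fun q => u ∣ q), (H : ℝ) := by
          refine Finset.sum_le_sum fun q hq => ?_
          have hq0 : 0 < q := (Finset.mem_Ioc.mp (Finset.mem_filter.mp hq).1).1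
          have hqR : (0 : ℝ) < q := by exact_mod_cast hq0
          have ht : (q.totient : ℝ) ≤ q := by exact_mod_cast Nat.totient_le q
          calc (q.totient : ℝ) * ((H : ℝ) / q - 2 * w) ≤ q.totient * ((H : ℝ) / q) := by
                gcongr
                have : (0 : ℝ) ≤ 2 * w := by positivity
                linarith
            _ ≤ q * ((H : ℝ) / q) := by gcongr
            _ = H := by field_simp
      _ = ((n / u : ℕ) : ℝ) * H := by
          rw [Finset.sum_const, Nat.Ioc_filter_dvd_card_eq_div, nsmul_eq_mul]
      _ ≤ ((n : ℝ) / u) * H := by gcongr; exact Nat.cast_div_le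
      _ = _ := by ring
  have h2 : ((n : ℝ) + 1) / 2 * (H - 2 * w * n) ≤
      ∑ q ∈ Finset.Ioc 0 n, (q.totient : ℝ) * ((H : ℝ) / q - 2 * w) := by
    have e1 : ∑ q ∈ Finset.Ioc 0 n, (q.totient : ℝ) * ((H : ℝ) / q - 2 * w)
        = H * (∑ q ∈ Finset.Ioc 0 n, (q.totient : ℝ) / q) - 2 * w * ∑ q ∈ Finset.Ioc 0 n, (q.totient : ℝ) := by
      rw [Finset.mul_sum, Finset.mul_sum, ← Finset.sum_sub_distrib]
      refine Finset.sum_congr rfl fun q _ => ?_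
      ring
    have e2 := wb_totient_sum n hn
    have e3 : ∑ q ∈ Finset.Ioc 0 n, (q.totient : ℝ) ≤ n * ((n : ℝ) + 1) / 2 := by
      clear hsplit h1 e1 e2 hn
      induction n with
      | zero => simp
      | succ k ih =>
        rw [Finset.sum_Ioc_succ_top (Nat.zero_le k)]
        have ht : ((k + 1).totient : ℝ) ≤ ((k + 1 : ℕ) : ℝ) := by exact_mod_cast Nat.totient_le (k + 1)
        push_cast at ht ⊢
        linarith
    rw [e1]
    have hH0 : (0 : ℝ) ≤ H := by positivity
    have hw0 : (0 : ℝ) ≤ 2 * w := by positivity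
    have := mul_le_mul_of_nonneg_left e2 hH0
    have := mul_le_mul_of_nonneg_left e3 hw0
    linarith
  linarith

end Counting
section Final

theorem wb_log_bounds (p : ℕ) (hp : (10:ℕ)^7 ≤ p) : (16 : ℝ) ≤ Real.log p := by
  have hpR : (10 : ℝ) ^ 7 ≤ p := by exact_mod_cast hp
  rw [Real.le_log_iff_exp_le (by linarith [show (0:ℝ) < 10 ^ 7 by norm_num])]
  have h1 : Real.exp 16 = (Real.exp 1) ^ 16 := by rw [← Real.exp_nat_mul]; norm_num
  rw [h1]
  have h2 := Real.exp_one_lt_d9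
  calc (Real.exp 1) ^ 16 ≤ (2.7182818286 : ℝ) ^ 16 := by gcongr
    _ ≤ 10 ^ 7 := by norm_num
    _ ≤ p := hpR

theorem wb_prime_order (p : ℕ) [Fact p.Prime] (χ : MulChar (ZMod p) ℂ) (hχ : χ ≠ 1) :
    ∃ (l k : ℕ), l.Prime ∧ k ≠ 0 ∧ (χ ^ k) ^ l = 1 ∧ χ ^ k ≠ 1 := by
  have hpos : 0 < orderOf χ := MulChar.orderOf_pos χ
  have hne : orderOf χ ≠ 1 := fun h => hχ (orderOf_eq_one_iff.mp h)
  obtain ⟨l, hl, k, hk⟩ := Nat.exists_prime_and_dvd hne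
  have hk0 : k ≠ 0 := by rintro rfl; rw [mul_zero] at hk; omega
  refine ⟨l, k, hl, hk0, ?_, ?_⟩
  · rw [← pow_mul, mul_comm, ← hk, pow_orderOf_eq_one]
  · intro h
    have h1 := Nat.le_of_dvd (Nat.pos_of_ne_zero hk0) (orderOf_dvd_of_pow_eq_one h)
    have := hl.two_le
    have : 2 * k ≤ l * k := Nat.mul_le_mul_right k this
    omega

set_option maxHeartbeats 1000000 in
theorem wb_key (p : ℕ) [Fact p.Prime] (hp : (10:ℕ)^7 ≤ p)
    (χ : MulChar (ZMod p) ℂ) (hχ : χ ≠ 1)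
    (u : ℕ) (hu : u.Prime) (hu2 : Real.exp 2 * Real.log p ≤ u)
    (H : ℕ)
    (hres : ∀ n : ℕ, 1 ≤ n → n ≤ H → Nat.gcd n u = 1 → χ (n : ZMod p) = 1) :
    (H : ℝ) ≤ 6 * (p : ℝ) ^ ((1:ℝ)/4) * Real.log p := by
  classical
  by_contra hcon
  push Not at hcon
  have hpR : (10 : ℝ) ^ 7 ≤ p := by exact_mod_cast hp
  have hp0 : (0 : ℝ) < p := by linarith [show (0:ℝ) < 10 ^ 7 by norm_num]
  have hL := wb_log_bounds p hp
  set L := Real.log p with hLdef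
  set r := (p : ℝ) ^ ((1:ℝ)/4) with hrdef
  have hr0 : 0 < r := Real.rpow_pos_of_pos hp0 _
  have hr4 : r ^ 4 = p := by
    rw [hrdef, ← Real.rpow_natCast, ← Real.rpow_mul hp0.le]; norm_num
  have hr56 : 56 ≤ r := by
    by_contra h
    push Not at h
    have : r ^ 4 < 56 ^ 4 := by gcongr
    rw [hr4] at this
    have : (56 : ℝ) ^ 4 ≤ 10 ^ 7 := by norm_num
    linarith
  have hLr : L ≤ 4 * r := by
    have h1 : L = 4 * Real.log r := by rw [hLdef, ← hr4, Real.log_pow]; norm_num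
    have h2 := Real.log_le_sub_one_of_pos hr0
    linarith
  have hsq : Real.sqrt p = r ^ 2 := by
    rw [← hr4, show r ^ 4 = (r ^ 2) ^ 2 by ring, Real.sqrt_sq (by positivity)]
  -- choice of w
  set w := Nat.clog 4 p with hwdef
  have hp4 : p ≤ 4 ^ w := Nat.le_pow_clog (by norm_num) p
  have hp2 : 1 < p := (Fact.out : p.Prime).one_lt
  have hw1 : 1 ≤ w := Nat.clog_pos (by norm_num) (Fact.out : p.Prime).two_le
  have hlog4 : Real.log 4 = 2 * Real.log 2 := by
    rw [show (4 : ℝ) = 2 ^ 2 by norm_num, Real.log_pow]; norm_num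
  have hl2a := Real.log_two_gt_d9
  have hl2b := Real.log_two_lt_d9
  have hwL1 : L ≤ w * 1.4 := by
    have h1 : (p : ℝ) ≤ 4 ^ w := by exact_mod_cast hp4
    have h2 := Real.log_le_log hp0 h1
    rw [Real.log_pow, hlog4] at h2
    have h3 : (0 : ℝ) ≤ w := by positivity
    nlinarith
  have hwL2 : (w : ℝ) ≤ 0.8 * L := by
    have h0 : 4 ^ w.pred < p := Nat.pow_pred_clog_lt_self (by norm_num) hp2
    have h1 : (4 : ℝ) ^ (w - 1) < p := by exact_mod_cast h0
    have h2 := Real.log_le_log (by positivity) h1.le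
    rw [Real.log_pow, hlog4, Nat.cast_sub hw1, Nat.cast_one] at h2
    have h3 : (1 : ℝ) ≤ w := by exact_mod_cast hw1
    have h4 : ((w : ℝ) - 1) * 1.386 ≤ L := by nlinarith
    linarith
  have hw0 : (0 : ℝ) < w := by exact_mod_cast hw1
  have he2 : (7 : ℝ) ≤ Real.exp 2 := by
    have h1 : Real.exp 2 = (Real.exp 1) ^ 2 := by rw [← Real.exp_nat_mul]; norm_num
    rw [h1]
    have h2 := Real.exp_one_gt_d9
    nlinarith
  have hu7 : 7 * L ≤ u := le_trans (by gcongr) hu2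
  have hu100 : (100 : ℝ) ≤ u := by linarith
  have hwu : 2 * w ≤ u := by
    have : ((2 * w : ℕ) : ℝ) ≤ u := by push_cast; linarith
    exact_mod_cast this
  have hwp : w ≤ p := by
    have : (w : ℝ) ≤ p := by
      rw [← hr4]
      have h3 : r ^ 2 * (r ^ 2) ≥ 1 * r ^ 2 := by gcongr; nlinarith
      nlinarith
    exact_mod_cast this
  -- choice of the length
  set Q := ⌊6 * r * L⌋₊ with hQdef
  have hQ1 : (Q : ℝ) ≤ 6 * r * L := Nat.floor_le (by positivity)
  have hQ2 : 6 * r * L < Q + 1 := Nat.lt_floor_add_one _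
  have hrL : 56 * 16 ≤ r * L := by gcongr
  have hQ3 : 5 * (r * L) ≤ Q := by linarith
  have hQH : Q ≤ H := by
    have : (Q : ℝ) ≤ H := by linarith
    exact_mod_cast this
  have hQp : Q < p := by
    have : (Q : ℝ) < p := by
      rw [← hr4]
      have h1 : 6 * r * L ≤ 6 * r * (4 * r) := by gcongr
      have h3 : r ^ 2 * (r ^ 2) ≥ 56 ^ 2 * r ^ 2 := by gcongr
      nlinarith
    exact_mod_cast this
  set n := Q / (4 * w) with hndef
  have hn1 : (n : ℝ) * (4 * w) ≤ Q := by
    have := Nat.div_mul_le_self Q (4 * w)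
    exact_mod_cast this
  have hn2 : (Q : ℝ) < (n + 1) * (4 * w) := by
    have := Nat.lt_mul_div_succ Q (show 0 < 4 * w by omega)
    rw [mul_comm] at this
    exact_mod_cast this
  have hnpos : 1 ≤ n := by
    rw [hndef, Nat.one_le_div_iff (by omega)]
    have : ((4 * w : ℕ) : ℝ) ≤ Q := by push_cast; nlinarith
    exact_mod_cast this
  have hnQ : n ≤ Q := Nat.div_le_self _ _
  have hnQp : n * Q ≤ p := by
    have : (n : ℝ) * Q ≤ p := by
      have h1 : (n : ℝ) * Q * (4 * w) ≤ Q * Q := by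
        have := mul_le_mul_of_nonneg_right hn1 (show (0 : ℝ) ≤ Q by positivity)
        linarith
      have h2 : (Q : ℝ) * Q ≤ (6 * r * L) * (6 * r * L) := by gcongr
      have h3 : (6 * r * L) * (6 * r * L) ≤ p * (4 * w) := by
        have e1 : 36 * r ^ 2 * L * L ≤ 36 * r ^ 2 * L * (w * 1.4) := by gcongr
        have e2 : 36 * r ^ 2 * L * (w * 1.4) ≤ 36 * r ^ 2 * (4 * r) * (w * 1.4) := by gcongr
        have e3 : 36 * r ^ 2 * (4 * r) * (w * 1.4) ≤ r ^ 4 * (4 * w) := by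
          have : 0 ≤ r ^ 3 * w * (r - 56) := by
            apply mul_nonneg (by positivity); linarith
          linarith [show 0 ≤ r ^ 3 * w by positivity]
        rw [← hr4]; linarith
      have h4 : (n : ℝ) * Q * (4 * w) ≤ p * (4 * w) := by linarith
      exact le_of_mul_le_mul_right h4 (by positivity)
    exact_mod_cast this
  -- the counting
  obtain ⟨l, k, hl, hk0, hψl, hψ1⟩ := wb_prime_order p χ hχ
  set ψ := χ ^ k with hψ
  have hresψ : ∀ m : ℕ, 1 ≤ m → m ≤ Q → Nat.gcd m u = 1 → ψ (m : ZMod p) = 1 := by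
    intro m h1 h2 h3
    rw [hψ, MulChar.pow_apply' χ hk0, hres m h1 (h2.trans hQH) h3, one_pow]
  let T : Finset (ZMod p) := Finset.univ.filter (fun x => ∀ m < w, ψ (x + (m : ℕ)) = 1)
  have hTm : ∀ x, x ∈ T ↔ ∀ m < w, ψ (x + (m : ℕ)) = 1 := by intro x; simp [T]
  have hA := wb_count p ψ u hu Q n w hw1 hwu hnQp hQp hnQ hresψ T (fun x hx => (hTm x).mpr hx)
  have hB := wb_win_card p u Q n w
  have hC := wb_lower u Q n w hnpos hu.pos
  have hM := wb_moment p l hl ψ hψl hψ1 w hw1 hwp T (fun x hx => (hTm x).mp hx)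
  rw [hsq] at hM
  have hN : (T.card : ℝ) ≤ w * r ^ 2 := by
    have h1 : r ^ 2 ≤ 2 ^ w := by
      have h2 : (r ^ 2) ^ 2 ≤ ((2 : ℝ) ^ w) ^ 2 := by
        have h3 : (p : ℝ) ≤ 4 ^ w := by exact_mod_cast hp4
        calc (r ^ 2) ^ 2 = p := by rw [← hr4]; ring
          _ ≤ 4 ^ w := h3
          _ = ((2 : ℝ) ^ w) ^ 2 := by rw [← pow_mul, mul_comm, pow_mul]; norm_num
      exact le_of_sq_le_sq h2 (by positivity)
    have h4 : (4 : ℝ) ^ w = 2 ^ w * 2 ^ w := by rw [← mul_pow]; norm_num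
    have h5 : (2 : ℝ) ^ w * p ≤ 4 ^ w * r ^ 2 := by
      rw [← hr4, h4, show r ^ 4 = r ^ 2 * r ^ 2 by ring, mul_assoc]
      gcongr
    have h6 : (T.card : ℝ) * 4 ^ w ≤ (w * r ^ 2) * 4 ^ w := by linarith
    exact le_of_mul_le_mul_right h6 (by positivity)
  have hAR : ((wbWin p u Q n w).card : ℝ) ≤ 2 * T.card := by exact_mod_cast hA
  have hfin : ((n : ℝ) + 1) / 2 * (Q - 2 * w * n) - Q * (n / u) ≤ 2 * (w * r ^ 2) := by linarith
  have hQ0 : (0 : ℝ) ≤ Q := by positivity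
  have g1 : (Q : ℝ) / 2 ≤ Q - 2 * w * n := by linarith
  have g2 : (Q : ℝ) * (Q / 2) ≤ ((n : ℝ) + 1) * (4 * w) * (Q - 2 * w * n) := by
    gcongr
  have g3 : (n : ℝ) / u ≤ n / 100 := by gcongr
  have g4 : (Q : ℝ) * (n / u) * (4 * w) ≤ Q * Q / 100 := by
    calc (Q : ℝ) * (n / u) * (4 * w) ≤ Q * (n / 100) * (4 * w) := by gcongr
      _ = Q * (n * (4 * w)) / 100 := by ring
      _ ≤ Q * Q / 100 := by gcongr
  have g5 := mul_le_mul_of_nonneg_right hfin (show (0 : ℝ) ≤ 4 * w by positivity)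
  have g6 : 0.24 * ((Q : ℝ) * Q) ≤ 8 * w ^ 2 * r ^ 2 := by linarith
  have g7 : (w : ℝ) ^ 2 ≤ (0.8 * L) ^ 2 := by gcongr
  have g8 : (5 * (r * L)) * (5 * (r * L)) ≤ (Q : ℝ) * Q := by gcongr
  have g9 : 8 * (w : ℝ) ^ 2 * r ^ 2 ≤ 8 * (0.8 * L) ^ 2 * r ^ 2 := by gcongr
  have g10 : 0 < (r * L) * (r * L) := by positivity
  linarith

end Final
section Numerics

theorem wb_burgessF (X : ℝ) (hX : 22 ≤ X) : 0 < burgessF X 89 ∧ burgessF X 89 ≤ 1 := by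
  have hX0 : 0 < X := by linarith
  have hlog0 : 0 ≤ Real.log X := Real.log_nonneg (by linarith)
  have hlog : Real.log X ≤ X / 20 + 2 := by
    have h1 : (20 : ℝ) ≤ Real.exp 3 := by
      have h1 : Real.exp 3 = (Real.exp 1) ^ 3 := by rw [← Real.exp_nat_mul]; norm_num
      rw [h1]
      have h2 := Real.exp_one_gt_d9
      calc (20 : ℝ) ≤ 2.7182818283 ^ 3 := by norm_num
        _ ≤ _ := by gcongr
    have h2 := Real.log_le_sub_one_of_pos (show 0 < X / Real.exp 3 by positivity)
    rw [Real.log_div hX0.ne' (Real.exp_pos 3).ne', Real.log_exp] at h2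
    have h3 : X / Real.exp 3 ≤ X / 20 := by gcongr
    linarith
  have hpi : Real.pi ^ 2 / 3 ≤ 3.4 := by
    have := Real.pi_lt_d2
    have := Real.pi_pos
    nlinarith
  have a1 : 1 / (2 * X ^ 2) ≤ 1 / (2 * 22 ^ 2) := by gcongr
  have a2 : 1 / (2 * X) ≤ 1 / (2 * 22) := by gcongr
  have a3 : (1 + Real.log X) / X ≤ 0.05 + 3 / 22 := by
    have h1 : (1 + Real.log X) / X ≤ (1 + (X / 20 + 2)) / X := by gcongr
    have h2 : (1 + (X / 20 + 2)) / X = 0.05 + 3 / X := by field_simp; ring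
    have h3 : 3 / X ≤ 3 / 22 := by gcongr
    linarith
  have a0 : 0 ≤ (1 + Real.log X) / X := by positivity
  have b1 : 0 ≤ 1 / (2 * X ^ 2) := by positivity
  have b2 : 0 ≤ 1 / (2 * X) := by positivity
  have hc : (1 / (1 - ((89 : ℕ) : ℝ)⁻¹)) = 89 / 88 := by norm_num
  unfold burgessF
  rw [hc]
  set Y := 1 / (2 * X ^ 2) + 1 / (2 * X) + 89 / 88 * ((1 + Real.log X) / X) with hY
  have hY0 : 0 ≤ Y := by positivity
  have hY1 : Y ≤ 0.22 := by linarith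
  constructor
  · have : Real.pi ^ 2 / 3 * Y ≤ 3.4 * 0.22 := by gcongr
    linarith
  · have : 0 ≤ Real.pi ^ 2 / 3 * Y := by positivity
    linarith

theorem wb_K : 6 ≤ Real.pi * Real.exp 1 / Real.sqrt 2 := by
  have h2 : 0 < Real.sqrt 2 := by positivity
  rw [le_div_iff₀ h2]
  have h1 : Real.sqrt 2 ≤ 1.415 := by
    rw [Real.sqrt_le_left (by norm_num)]; norm_num
  have h3 := Real.pi_gt_d2
  have h4 := Real.exp_one_gt_d9
  have : (3.14 : ℝ) * 2.718 ≤ Real.pi * Real.exp 1 := by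
    apply mul_le_mul <;> linarith
  linarith

end Numerics

theorem main_H_bound (p : ℕ) [Fact p.Prime] (hp : (10:ℕ)^7 ≤ p)
    (χ : DirichletCharacter ℂ p) (hχ : χ ≠ 1)
    (u : ℕ) (hu : u.Prime) (hu2 : Real.exp 2 * Real.log p ≤ u)
    (H : ℕ) (hH : 0 < H)
    (hres : ∀ n : ℕ, 1 ≤ n → n ≤ H → Nat.gcd n u = 1 → χ (n : ZMod p) = 1)
    (hHle : (H : ℝ) ≤ (2 * Real.exp 2 * Real.log p - 2) ^ ((1:ℝ)/2) * (p : ℝ) ^ ((1:ℝ)/2)) :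
    (H : ℝ) ≤ (Real.pi * Real.exp 1 / Real.sqrt 2) *
      Real.sqrt ((1 + 4 / (3 * Real.log p)) /
        ((1 - 1 / (Real.exp 2 * Real.log p)) *
          burgessF ((Real.pi * Real.exp 1 / Real.sqrt 2) * (p : ℝ) ^ ((1:ℝ)/4) / (2 * Real.exp 2)) 89)) *
      (p : ℝ) ^ ((1:ℝ)/4) * Real.log p := by
  have hkey := wb_key p hp χ hχ u hu hu2 H hres
  have hK := wb_K
  set K := Real.pi * Real.exp 1 / Real.sqrt 2 with hKdef
  have hpR : (10 : ℝ) ^ 7 ≤ p := by exact_mod_cast hp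
  have hp0 : (0 : ℝ) < p := by linarith [show (0:ℝ) < 10 ^ 7 by norm_num]
  have hL := wb_log_bounds p hp
  set L := Real.log p with hLdef
  set r := (p : ℝ) ^ ((1:ℝ)/4) with hrdef
  have hr0 : 0 < r := Real.rpow_pos_of_pos hp0 _
  have hr4 : r ^ 4 = p := by
    rw [hrdef, ← Real.rpow_natCast, ← Real.rpow_mul hp0.le]; norm_num
  have hr56 : 56 ≤ r := by
    by_contra h
    push Not at h
    have : r ^ 4 < 56 ^ 4 := by gcongr
    rw [hr4] at this
    have : (56 : ℝ) ^ 4 ≤ 10 ^ 7 := by norm_num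
    linarith
  have he : Real.exp 2 = (Real.exp 1) ^ 2 := by rw [← Real.exp_nat_mul]; norm_num
  have he1 : Real.exp 2 ≤ 7.5 := by
    rw [he]
    have h2 := Real.exp_one_lt_d9
    calc (Real.exp 1) ^ 2 ≤ 2.7182818286 ^ 2 := by gcongr
      _ ≤ 7.5 := by norm_num
  have he2 : 1 ≤ Real.exp 2 := Real.one_le_exp (by norm_num)
  have hX : 22 ≤ K * r / (2 * Real.exp 2) := by
    rw [le_div_iff₀ (by positivity)]
    have : 6 * 56 ≤ K * r := by gcongr
    linarith
  obtain ⟨hF0, hF1⟩ := wb_burgessF _ hX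
  set F := burgessF (K * r / (2 * Real.exp 2)) 89 with hFdef
  have hL0 : 0 < L := by linarith
  have heL : 16 ≤ Real.exp 2 * L := by nlinarith
  have hd1 : 1 / (Real.exp 2 * L) ≤ 1 / 16 := by gcongr
  have hd2 : 0 ≤ 1 / (Real.exp 2 * L) := by positivity
  have hD0 : 0 < (1 - 1 / (Real.exp 2 * L)) * F := mul_pos (by linarith) hF0
  have hD1 : (1 - 1 / (Real.exp 2 * L)) * F ≤ 1 := mul_le_one₀ (by linarith) hF0.le hF1
  have hnum : 1 ≤ 1 + 4 / (3 * L) := by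
    have : 0 ≤ 4 / (3 * L) := by positivity
    linarith
  have hg : 1 ≤ Real.sqrt ((1 + 4 / (3 * L)) / ((1 - 1 / (Real.exp 2 * L)) * F)) := by
    rw [Real.one_le_sqrt, le_div_iff₀ hD0]
    linarith
  set g := Real.sqrt ((1 + 4 / (3 * L)) / ((1 - 1 / (Real.exp 2 * L)) * F)) with hgdef
  calc (H : ℝ) ≤ 6 * r * L := hkey
    _ = 6 * 1 * r * L := by ring
    _ ≤ K * g * r * L := by gcongr
end

section
/- Let X > 1 be a real number and let u be a prime. Then Σ_{1 ≤ q ≤ X, gcd(q,u)=1} φ(q) ≥ (3/π²)·(1 − u^{-1})·X²·f(X,u), where the sum is over positive integers q ≤ X coprime to u and f(X,u) = 1 − (π²/3)·( 1/(2X²) + 1/(2X) + (1/(1 − u^{-1}))·(1 + log X)/X ). -/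
open Finset

/-- Möbius function restricted to integers coprime to `u`. -/
noncomputable def auxF (u : ℕ) : ArithmeticFunction ℝ :=
  ⟨fun d => if Nat.Coprime d u then (ArithmeticFunction.moebius d : ℝ) else 0, by simp⟩

/-- Identity function restricted to integers coprime to `u`. -/
noncomputable def auxG (u : ℕ) : ArithmeticFunction ℝ :=
  ⟨fun d => if Nat.Coprime d u then (d : ℝ) else 0, by simp⟩

lemma auxF_apply (u d : ℕ) : auxF u d =
    if Nat.Coprime d u then (ArithmeticFunction.moebius d : ℝ) else 0 := rfl

lemma auxG_apply (u d : ℕ) : auxG u d = if Nat.Coprime d u then (d : ℝ) else 0 := rfl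

lemma auxFG (u q : ℕ) (hq : 0 < q) : (auxF u * auxG u) q =
    if Nat.Coprime q u then (Nat.totient q : ℝ) else 0 := by
  have h := (ArithmeticFunction.sum_eq_iff_sum_mul_moebius_eq
    (f := fun n => (Nat.totient n : ℝ)) (g := fun n => (n : ℝ))).1
    (fun n _ => by exact_mod_cast Nat.sum_totient n) q hq
  rw [ArithmeticFunction.mul_apply, ← h]
  split_ifs with hc
  · refine Finset.sum_congr rfl fun x hx => ?_
    have hx' := (Nat.mem_divisorsAntidiagonal.1 hx).1
    rw [← hx', Nat.coprime_mul_iff_left] at hc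
    rw [auxF_apply, auxG_apply, if_pos hc.1, if_pos hc.2]
  · refine Finset.sum_eq_zero fun x hx => ?_
    have hx' := (Nat.mem_divisorsAntidiagonal.1 hx).1
    rw [← hx', Nat.coprime_mul_iff_left] at hc
    rw [auxF_apply, auxG_apply]
    by_cases h1 : Nat.Coprime x.1 u
    · have h2 : ¬ Nat.Coprime x.2 u := fun h2 => hc ⟨h1, h2⟩
      simp [h2]
    · simp [h1]

lemma auxG_sum (u : ℕ) (hu : u.Prime) (M : ℕ) : ∑ m ∈ Ioc 0 M, auxG u m =
    (M : ℝ) * (M + 1) / 2 - u * (((M / u : ℕ) : ℝ) * ((M / u : ℕ) + 1) / 2) := by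
  induction M with
  | zero => simp
  | succ M ih =>
    rw [Finset.sum_Ioc_succ_top (by omega), ih, Nat.succ_div, auxG_apply]
    have hc : Nat.Coprime (M + 1) u ↔ ¬ u ∣ M + 1 := by
      rw [Nat.coprime_comm]; exact hu.coprime_iff_not_dvd
    by_cases hd : u ∣ M + 1
    · have h1 : u * (M / u + 1) = M + 1 := by
        have := Nat.mul_div_cancel' hd
        rwa [Nat.succ_div_of_dvd hd] at this
      have h2 : (u : ℝ) * (((M / u : ℕ) : ℝ) + 1) = M + 1 := by exact_mod_cast h1
      simp only [hc, hd, not_true_eq_false, if_true, if_false]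
      push_cast
      linear_combination h2
    · simp only [hc, hd, not_false_eq_true, if_true, if_false]
      push_cast
      ring

lemma floor_bounds (Y : ℝ) (hY : 0 ≤ Y) :
    Y ^ 2 - Y ≤ (⌊Y⌋₊ : ℝ) * (⌊Y⌋₊ + 1) ∧ (⌊Y⌋₊ : ℝ) * (⌊Y⌋₊ + 1) ≤ Y ^ 2 + Y := by
  have h1 := Nat.floor_le hY
  have h2 := (Nat.lt_floor_add_one Y).le
  have h3 : (0 : ℝ) ≤ ⌊Y⌋₊ := by positivity
  constructor <;> nlinarith

lemma auxG_bound (u : ℕ) (hu : u.Prime) (Y : ℝ) (hY : 0 ≤ Y) :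
    |∑ m ∈ Ioc 0 ⌊Y⌋₊, auxG u m - (1 - (u : ℝ)⁻¹) * Y ^ 2 / 2| ≤ Y := by
  rw [auxG_sum u hu, ← Nat.floor_div_natCast]
  have hu0 : (0 : ℝ) < u := by exact_mod_cast hu.pos
  obtain ⟨a1, a2⟩ := floor_bounds Y hY
  obtain ⟨b1, b2⟩ := floor_bounds (Y / u) (by positivity)
  have c1 := mul_le_mul_of_nonneg_left b1 hu0.le
  have c2 := mul_le_mul_of_nonneg_left b2 hu0.le
  have e1 : (u : ℝ) * ((Y / u) ^ 2 - Y / u) = (u : ℝ)⁻¹ * Y ^ 2 - Y := by field_simp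
  have e2 : (u : ℝ) * ((Y / u) ^ 2 + Y / u) = (u : ℝ)⁻¹ * Y ^ 2 + Y := by field_simp
  rw [e1] at c1
  rw [e2] at c2
  rw [abs_le]
  constructor <;> nlinarith

lemma auxF_abs (u d : ℕ) : |auxF u d| ≤ 1 := by
  rw [auxF_apply]
  split_ifs
  · exact_mod_cast ArithmeticFunction.abs_moebius_le_one
  · simp

lemma auxF_summable (u : ℕ) : Summable fun d : ℕ => auxF u d / (d : ℝ) ^ 2 := by
  refine Summable.of_norm_bounded (g := fun d : ℕ => 1 / (d : ℝ) ^ 2) hasSum_zeta_two.summable ?_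
  intro d
  rw [Real.norm_eq_abs, abs_div, abs_of_nonneg (by positivity : (0 : ℝ) ≤ (d : ℝ) ^ 2)]
  gcongr
  exact auxF_abs u d

lemma auxF_tsum (u : ℕ) (hu : u.Prime) :
    6 / Real.pi ^ 2 ≤ ∑' d : ℕ, auxF u d / (d : ℝ) ^ 2 := by
  have hχ : ∀ n : ℕ, (1 : DirichletCharacter ℂ u) (n : ZMod u) =
      if Nat.Coprime n u then 1 else 0 := by
    intro n
    split_ifs with h
    · exact MulChar.one_apply ((ZMod.isUnit_iff_coprime n u).2 h)
    · exact MulChar.map_nonunit _ (fun h' => h ((ZMod.isUnit_iff_coprime n u).1 h'))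
  have h := DirichletCharacter.LSeries.mul_mu_eq_one (1 : DirichletCharacter ℂ u)
    (s := 2) (by norm_num)
  set b : ℕ → ℝ := fun n => if Nat.Coprime n u then 1 / (n : ℝ) ^ 2 else 0 with hb
  have hble : ∀ n, b n ≤ 1 / (n : ℝ) ^ 2 := by
    intro n
    simp only [hb]
    split_ifs
    · exact le_rfl
    · positivity
  have hb0 : ∀ n, 0 ≤ b n := by
    intro n
    simp only [hb]
    split_ifs
    · positivity
    · exact le_rfl
  have hbs : Summable b := Summable.of_nonneg_of_le hb0 hble hasSum_zeta_two.summable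
  have hB : ∑' n, b n ≤ Real.pi ^ 2 / 6 := by
    rw [← hasSum_zeta_two.tsum_eq]
    exact hbs.tsum_le_tsum hble hasSum_zeta_two.summable
  have hB0 : 0 ≤ ∑' n, b n := tsum_nonneg hb0
  have hm : (∑' n, b n) * ∑' d : ℕ, auxF u d / (d : ℝ) ^ 2 = 1 := by
    have e1 : LSeries (fun n : ℕ => (1 : DirichletCharacter ℂ u) (n : ZMod u)) 2
        = ((∑' n, b n : ℝ) : ℂ) := by
      rw [LSeries, Complex.ofReal_tsum]
      refine tsum_congr fun n => ?_
      rcases Nat.eq_zero_or_pos n with rfl | hn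
      · simp [hb]
      · rw [LSeries.term_of_ne_zero hn.ne', hχ]
        simp only [hb]
        split_ifs <;> simp
    have e2 : LSeries ((fun n : ℕ => (1 : DirichletCharacter ℂ u) (n : ZMod u)) *
        (fun n : ℕ => ((ArithmeticFunction.moebius n : ℤ) : ℂ))) 2
        = ((∑' d : ℕ, auxF u d / (d : ℝ) ^ 2 : ℝ) : ℂ) := by
      rw [LSeries, Complex.ofReal_tsum]
      refine tsum_congr fun n => ?_
      rcases Nat.eq_zero_or_pos n with rfl | hn
      · simp
      · rw [LSeries.term_of_ne_zero hn.ne', Pi.mul_apply, hχ, auxF_apply]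
        split_ifs <;> simp
    rw [e1, e2] at h
    exact_mod_cast h
  have hBpos : 0 < ∑' n, b n := by
    rcases hB0.eq_or_lt with h0 | h0
    · rw [← h0] at hm; simp at hm
    · exact h0
  have : ∑' d : ℕ, auxF u d / (d : ℝ) ^ 2 = 1 / ∑' n, b n := by
    field_simp; linarith
  rw [this]
  have h6 : 6 / Real.pi ^ 2 = 1 / (Real.pi ^ 2 / 6) := by field_simp
  rw [h6]
  exact one_div_le_one_div_of_le hBpos hB

lemma auxF_partial (u n : ℕ) (hn : 0 < n) (k : ℕ) :
    ∑ d ∈ range (n + (k + 1)), auxF u d / (d : ℝ) ^ 2 ≤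
      ∑ d ∈ range n, auxF u d / (d : ℝ) ^ 2 + (1 / (n : ℝ) ^ 2 + 1 / n - 1 / (n + k)) := by
  have hle : ∀ d : ℕ, auxF u d / (d : ℝ) ^ 2 ≤ 1 / (d : ℝ) ^ 2 := fun d => by
    gcongr
    exact (abs_le.1 (auxF_abs u d)).2
  have hn0 : (0 : ℝ) < n := by exact_mod_cast hn
  induction k with
  | zero =>
    rw [zero_add, Finset.sum_range_succ]
    have := hle n
    simp only [Nat.cast_zero, add_zero]
    linarith
  | succ k ih =>
    rw [← add_assoc, Finset.sum_range_succ]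
    have h1 := hle (n + (k + 1))
    have h2 : 1 / (((n + (k + 1) : ℕ) : ℝ)) ^ 2 ≤ 1 / ((n : ℝ) + k) - 1 / (n + (k + 1)) := by
      push_cast
      have hp : (0 : ℝ) < (n : ℝ) + k := by positivity
      rw [div_sub_div _ _ hp.ne' (by positivity), div_le_div_iff₀ (by positivity) (by positivity)]
      nlinarith
    push_cast at *
    linarith

lemma auxF_finite (u : ℕ) (hu : u.Prime) (X : ℝ) (hX : 1 < X) :
    6 / Real.pi ^ 2 - (1 / X ^ 2 + 1 / X) ≤ ∑ d ∈ Ioc 0 ⌊X⌋₊, auxF u d / (d : ℝ) ^ 2 := by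
  have h0 := auxF_tsum u hu
  set n := ⌊X⌋₊ + 1 with hn
  have hXn : X ≤ n := by rw [hn]; push_cast; exact (Nat.lt_floor_add_one X).le
  have ht : ∑' d : ℕ, auxF u d / (d : ℝ) ^ 2 ≤
      ∑ d ∈ range n, auxF u d / (d : ℝ) ^ 2 + (1 / (n : ℝ) ^ 2 + 1 / n) := by
    have hl := (auxF_summable u).hasSum.tendsto_sum_nat
    have hl2 := (Filter.tendsto_add_atTop_iff_nat (n + 1)).2 hl
    refine le_of_tendsto' hl2 fun k => ?_
    have := auxF_partial u n (by omega) k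
    rw [show k + (n + 1) = n + (k + 1) by ring]
    have : (0 : ℝ) ≤ 1 / (n + k) := by positivity
    linarith
  have e : ∑ d ∈ range n, auxF u d / (d : ℝ) ^ 2 = ∑ d ∈ Ioc 0 ⌊X⌋₊, auxF u d / (d : ℝ) ^ 2 := by
    symm
    refine Finset.sum_subset (fun d hd => ?_) (fun d hd hd' => ?_)
    · simp only [mem_Ioc, mem_range] at *; omega
    · have : d = 0 := by
        simp only [mem_Ioc, mem_range] at *; omega
      simp [this]
  have h1 : 1 / (n : ℝ) ≤ 1 / X := by gcongr
  have h2 : 1 / (n : ℝ) ^ 2 ≤ 1 / X ^ 2 := by gcongr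
  rw [e] at ht
  linarith

theorem totient_sum_lower_bound (X : ℝ) (hX : 1 < X) (u : ℕ) (hu : u.Prime) :
    (3 / Real.pi ^ 2) * (1 - (u : ℝ)⁻¹) * X ^ 2 * burgessF X u ≤
      ∑ q ∈ (Finset.Icc 1 ⌊X⌋₊).filter (fun q => Nat.gcd q u = 1), (Nat.totient q : ℝ) := by
  have hX0 : 0 < X := by linarith
  have e1 : ∑ q ∈ (Finset.Icc 1 ⌊X⌋₊).filter (fun q => Nat.gcd q u = 1), (Nat.totient q : ℝ)
      = ∑ d ∈ Ioc 0 ⌊X⌋₊, auxF u d * ∑ m ∈ Ioc 0 ⌊X / d⌋₊, auxG u m := by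
    simp_rw [Nat.floor_div_natCast]
    rw [← ArithmeticFunction.sum_Ioc_mul_eq_sum_sum, Finset.sum_filter]
    refine Finset.sum_congr rfl fun q hq => ?_
    have hq0 : 0 < q := (Finset.mem_Icc.1 hq).1
    rw [auxFG u q hq0]
  have hu1 : (u : ℝ)⁻¹ < 1 := inv_lt_one_of_one_lt₀ (by exact_mod_cast hu.one_lt)
  set c : ℝ := 1 - (u : ℝ)⁻¹ with hc
  have hc0 : 0 < c := by linarith
  have e2 : ∑ d ∈ Ioc 0 ⌊X⌋₊, (c * X ^ 2 / 2 * (auxF u d / (d : ℝ) ^ 2) - X * (d : ℝ)⁻¹) ≤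
      ∑ d ∈ Ioc 0 ⌊X⌋₊, auxF u d * ∑ m ∈ Ioc 0 ⌊X / d⌋₊, auxG u m := by
    refine Finset.sum_le_sum fun d hd => ?_
    have hb := auxG_bound u hu (X / d) (by positivity)
    set S := ∑ m ∈ Ioc 0 ⌊X / d⌋₊, auxG u m
    have h1 : |auxF u d * (S - c * (X / d) ^ 2 / 2)| ≤ X / d := by
      rw [abs_mul]
      calc _ ≤ 1 * (X / d) := mul_le_mul (auxF_abs u d) hb (abs_nonneg _) zero_le_one
        _ = _ := one_mul _
    have h2 := (abs_le.1 h1).1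
    have h3 : c * X ^ 2 / 2 * (auxF u d / (d : ℝ) ^ 2) = auxF u d * (c * (X / d) ^ 2 / 2) := by
      ring
    rw [h3, ← div_eq_mul_inv]
    linarith
  rw [Finset.sum_sub_distrib, ← Finset.mul_sum, ← Finset.mul_sum] at e2
  have h1 := auxF_finite u hu X hX
  have h2 : ∑ d ∈ Ioc 0 ⌊X⌋₊, (d : ℝ)⁻¹ ≤ 1 + Real.log X := by
    have := harmonic_floor_le_one_add_log X hX.le
    rw [harmonic_eq_sum_Icc] at this
    push_cast at this
    exact this
  have h3 := mul_le_mul_of_nonneg_left h1 (show 0 ≤ c * X ^ 2 / 2 by positivity)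
  have h4 := mul_le_mul_of_nonneg_left h2 hX0.le
  rw [e1]
  have e3 : (3 / Real.pi ^ 2) * c * X ^ 2 * burgessF X u =
      c * X ^ 2 / 2 * (6 / Real.pi ^ 2 - (1 / X ^ 2 + 1 / X)) - X * (1 + Real.log X) := by
    rw [burgessF, ← hc]
    have := Real.pi_ne_zero
    field_simp
    ring
  rw [e3]
  linarith
end

section
/- Let χ be a non-principal Dirichlet character modulo an integer m ≥ 10^{15}, and let q_1 < q_2 be the two smallest prime non-residues of χ. Then q_2 < 2·m^{1/2}·log m. -/
open ZMod AddChar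

lemma gauss_norm_sq {N : ℕ} [NeZero N] {φ : DirichletCharacter ℂ N} (hφ : φ.IsPrimitive) :
    ‖gaussSum φ (stdAddChar (N := N))‖ ^ 2 = N := by
  have h1 := congrFun (ZMod.dft_dft (fun j => φ j)) (-1)
  rw [ZMod.dft_apply] at h1
  simp only [hφ.fourierTransform_eq_inv_mul_gaussSum] at h1
  have h2 := star_gaussSum_eq φ (stdAddChar (N := N))
  have h3 : gaussSum φ (stdAddChar (N := N)) * star (gaussSum φ (stdAddChar (N := N))) = N := by
    rw [h2]
    simp only [neg_neg, map_one, smul_eq_mul, mul_one] at h1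
    rw [← h1]
    conv_lhs => rw [gaussSum.eq_1 φ⁻¹, Finset.mul_sum, ← Equiv.sum_comp (Equiv.neg (ZMod N))]
    refine Finset.sum_congr rfl fun x _ => ?_
    simp [AddChar.inv_apply]
    ring
  have h4 : ((‖gaussSum φ (stdAddChar (N := N))‖ ^ 2 : ℝ) : ℂ) = (N : ℂ) := by
    rw [← h3, ← starRingEnd_apply, Complex.mul_conj, Complex.normSq_eq_norm_sq]
  exact_mod_cast h4

lemma sum_range_mul_aux {M : Type*} [AddCommMonoid M] (f d : ℕ) (F : ℕ → M) :
    ∑ k ∈ Finset.range (f * d), F k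
      = ∑ y ∈ Finset.range d, ∑ x ∈ Finset.range f, F (f * y + x) := by
  induction d with
  | zero => simp
  | succ d ih => rw [Nat.mul_succ, Finset.sum_range_add, ih, Finset.sum_range_succ]

lemma std_nat {N : ℕ} [NeZero N] (j : ℕ) :
    stdAddChar (N := N) (j : ZMod N) = Complex.exp (2 * Real.pi * Complex.I * j / N) := by
  have := ZMod.stdAddChar_coe (N := N) (j : ℤ)
  simpa using this

lemma sum_zmod_range {N : ℕ} [NeZero N] (F : ZMod N → ℂ) :
    ∑ x : ZMod N, F x = ∑ x ∈ Finset.range N, F (x : ZMod N) := by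
  symm
  refine Finset.sum_bij (fun x _ => (x : ZMod N)) (by simp) ?_ ?_ (by simp)
  · intro a ha b hb h
    have := (ZMod.natCast_eq_natCast_iff' a b N).1 h
    rwa [Nat.mod_eq_of_lt (Finset.mem_range.1 ha), Nat.mod_eq_of_lt (Finset.mem_range.1 hb)] at this
  · intro b _
    exact ⟨b.val, by simpa using ZMod.val_lt b, by simp⟩

lemma std_sum {N : ℕ} [NeZero N] (n : ZMod N) :
    ∑ y ∈ Finset.range N, stdAddChar (N := N) ((y : ZMod N) * n) = if n = 0 then (N : ℂ) else 0 := by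
  have := AddChar.sum_mulShift n (ZMod.isPrimitive_stdAddChar N)
  rw [sum_zmod_range (fun x => stdAddChar (N := N) (x * n))] at this
  simpa using this

lemma twisted_sum {f d : ℕ} [NeZero f] [NeZero d] {ψ : DirichletCharacter ℂ f}
    (hψ : ψ.IsPrimitive) (n : ℕ) :
    haveI : NeZero (f * d) := ⟨mul_ne_zero (NeZero.ne f) (NeZero.ne d)⟩
    ∑ k ∈ Finset.range (f * d), ψ⁻¹ (k : ZMod f) * stdAddChar (N := f * d) ((k : ZMod (f*d)) * n)
      = if d ∣ n then d * ψ ((n / d : ℕ) : ZMod f) * gaussSum ψ⁻¹ (stdAddChar (N := f)) else 0 := by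
  haveI : NeZero (f * d) := ⟨mul_ne_zero (NeZero.ne f) (NeZero.ne d)⟩
  have hf : (f : ℂ) ≠ 0 := by exact_mod_cast NeZero.ne f
  have hd : (d : ℂ) ≠ 0 := by exact_mod_cast NeZero.ne d
  rw [sum_range_mul_aux]
  have h1 : ∀ y x : ℕ, ψ⁻¹ ((f * y + x : ℕ) : ZMod f) *
      stdAddChar (N := f * d) (((f * y + x : ℕ) : ZMod (f*d)) * n) =
      stdAddChar (N := d) ((y : ZMod d) * n) *
        (ψ⁻¹ (x : ZMod f) * stdAddChar (N := f * d) ((x : ZMod (f*d)) * n)) := by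
    intro y x
    have a1 : ((f * y + x : ℕ) : ZMod f) = (x : ZMod f) := by push_cast; simp
    have a2 : ((f * y + x : ℕ) : ZMod (f*d)) * n = ((f * (y * n) : ℕ) : ZMod (f*d)) + (x : ZMod (f*d)) * n := by
      push_cast; ring
    rw [a1, a2, AddChar.map_add_eq_mul, std_nat]
    have a3 : (y : ZMod d) * n = ((y * n : ℕ) : ZMod d) := by push_cast; ring
    rw [a3, std_nat]
    have a4 : (2 * Real.pi * Complex.I * ((f * (y * n) : ℕ) : ℂ) / ((f * d : ℕ) : ℂ))
        = (2 * Real.pi * Complex.I * ((y * n : ℕ) : ℂ) / (d : ℂ)) := by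
      push_cast; field_simp
    rw [a4]; ring
  simp_rw [h1, ← Finset.mul_sum]
  rw [← Finset.sum_mul, std_sum]
  by_cases hdn : d ∣ n
  · rw [if_pos ((ZMod.natCast_eq_zero_iff n d).2 hdn), if_pos hdn, mul_assoc]
    congr 1
    obtain ⟨c, rfl⟩ := hdn
    rw [Nat.mul_div_cancel_left _ (Nat.pos_of_ne_zero (NeZero.ne d))]
    have hp : ψ⁻¹.IsPrimitive := by
      rw [DirichletCharacter.isPrimitive_def, DirichletCharacter.conductor_inv]; exact hψ
    have h2 := gaussSum_mulShift_of_isPrimitive (stdAddChar (N := f)) hp (c : ZMod f)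
    rw [inv_inv] at h2
    rw [← h2, gaussSum, sum_zmod_range (fun x => ψ⁻¹ x * (stdAddChar (N := f)).mulShift (c : ZMod f) x)]
    refine Finset.sum_congr rfl fun x _ => ?_
    congr 1
    rw [AddChar.mulShift_apply]
    have b1 : (x : ZMod (f*d)) * ((d * c : ℕ) : ZMod (f*d)) = ((x * (d * c) : ℕ) : ZMod (f*d)) := by
      push_cast; ring
    have b2 : (c : ZMod f) * (x : ZMod f) = ((c * x : ℕ) : ZMod f) := by push_cast; ring
    rw [b1, b2, std_nat, std_nat]
    congr 1
    push_cast; field_simp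
  · rw [if_neg (fun h => hdn ((ZMod.natCast_eq_zero_iff n d).1 h)), if_neg hdn, zero_mul]

lemma parseval_aux {N : ℕ} [NeZero N] (t : ℕ) (ht : t ≤ N) :
    ∑ k ∈ Finset.range N, ‖∑ a ∈ Finset.range t, stdAddChar (N := N) ((k : ZMod N) * a)‖ ^ 2
      = N * t := by
  have h : ((∑ k ∈ Finset.range N, ‖∑ a ∈ Finset.range t, stdAddChar (N := N) ((k : ZMod N) * a)‖ ^ 2 : ℝ) : ℂ)
      = N * t := by
    push_cast
    have h1 : ∀ k : ℕ, ((‖∑ a ∈ Finset.range t, stdAddChar (N := N) ((k : ZMod N) * a)‖ : ℂ)) ^ 2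
        = ∑ a ∈ Finset.range t, ∑ b ∈ Finset.range t,
          stdAddChar (N := N) ((k : ZMod N) * ((a : ZMod N) - b)) := by
      intro k
      rw [← Complex.mul_conj', map_sum, Finset.sum_mul_sum]
      refine Finset.sum_congr rfl fun a _ => Finset.sum_congr rfl fun b _ => ?_
      rw [mul_sub, sub_eq_add_neg, AddChar.map_add_eq_mul, AddChar.map_neg_eq_conj]
    simp_rw [h1]
    rw [Finset.sum_comm]
    have h2 : ∀ a ∈ Finset.range t, ∑ k ∈ Finset.range N, ∑ b ∈ Finset.range t,
          stdAddChar (N := N) ((k : ZMod N) * ((a : ZMod N) - b)) = N := by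
      intro a ha
      rw [Finset.sum_comm]
      simp_rw [std_sum]
      rw [Finset.sum_eq_single a]
      · simp
      · intro b hb hab
        rw [if_neg]
        intro h
        apply hab
        have := (ZMod.natCast_eq_natCast_iff' a b N).1 (sub_eq_zero.1 h)
        rw [Nat.mod_eq_of_lt (by have := Finset.mem_range.1 ha; omega),
          Nat.mod_eq_of_lt (by have := Finset.mem_range.1 hb; omega)] at this
        exact this.symm
      · intro h; exact absurd ha h
    rw [Finset.sum_congr rfl h2]
    simp [mul_comm]
  exact_mod_cast h

lemma parseval_bound {N : ℕ} [NeZero N] (h : ℕ) :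
    ∑ k ∈ (Finset.range N).filter (fun k => k ≠ 0),
      ‖∑ a ∈ Finset.range h, stdAddChar (N := N) ((k : ZMod N) * a)‖ ^ 2 ≤ N * h := by
  induction h using Nat.strong_induction_on with
  | _ h ih =>
    by_cases hN : h ≤ N
    · rw [← parseval_aux h hN]
      exact Finset.sum_le_sum_of_subset_of_nonneg (Finset.filter_subset _ _)
        (fun _ _ _ => by positivity)
    · push Not at hN
      have hpos : 0 < N := Nat.pos_of_ne_zero (NeZero.ne N)
      obtain ⟨c, rfl⟩ := Nat.exists_eq_add_of_le hN.le
      refine le_trans (le_of_eq ?_) ((ih c (by omega)).trans ?_)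
      · refine Finset.sum_congr rfl fun k hk => ?_
        rw [Finset.mem_filter, Finset.mem_range] at hk
        have h0 : (k : ZMod N) ≠ 0 := by
          intro hh
          have := (ZMod.natCast_eq_zero_iff k N).1 hh
          exact absurd (Nat.le_of_dvd (Nat.pos_of_ne_zero hk.2) this) (by omega)
        have h1 := std_sum (k : ZMod N)
        rw [if_neg h0] at h1
        rw [Finset.sum_range_add]
        simp_rw [mul_comm (k : ZMod N)] at *
        rw [h1, zero_add]
        simp
      · push_cast
        nlinarith [(Nat.cast_nonneg N : (0:ℝ) ≤ N)]

/-- Smoothed Polya-Vinogradov. -/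
lemma smoothed_pv {f d : ℕ} [NeZero f] [NeZero d] {ψ : DirichletCharacter ℂ f}
    (hψ : ψ.IsPrimitive) (hf : f ≠ 1) (h : ℕ) :
    ‖∑ a ∈ Finset.range h, ∑ b ∈ Finset.range h,
      (if d ∣ (a + b + 1) then ψ ((a + b + 1 : ℕ) : ZMod f) else 0)‖ ≤ h * Real.sqrt f := by
  haveI : NeZero (f * d) := ⟨mul_ne_zero (NeZero.ne f) (NeZero.ne d)⟩
  set e := stdAddChar (N := f * d) with he
  set τ := gaussSum ψ⁻¹ (stdAddChar (N := f)) with hτ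
  have hp : ψ⁻¹.IsPrimitive := by
    rw [DirichletCharacter.isPrimitive_def, DirichletCharacter.conductor_inv]; exact hψ
  have hτn : ‖τ‖ = Real.sqrt f := by
    rw [← gauss_norm_sq hp, Real.sqrt_sq (norm_nonneg _)]
  set E : ℕ → ℂ := fun k => ∑ a ∈ Finset.range h, e ((k : ZMod (f*d)) * a) with hE
  set S := ∑ a ∈ Finset.range h, ∑ b ∈ Finset.range h,
      (if d ∣ (a + b + 1) then ψ ((a + b + 1 : ℕ) : ZMod f) else 0) with hS
  have key : S * (d * τ) = ψ (d : ZMod f) * ∑ k ∈ Finset.range (f * d),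
      ψ⁻¹ (k : ZMod f) * (e k * E k ^ 2) := by
    have h1 : ∀ n : ℕ, (if d ∣ n then ψ (n : ZMod f) else 0) * (d * τ) =
        ψ (d : ZMod f) * ∑ k ∈ Finset.range (f * d), ψ⁻¹ (k : ZMod f) * e ((k : ZMod (f*d)) * n) := by
      intro n
      have := twisted_sum (d := d) hψ n
      rw [this]
      by_cases hdn : d ∣ n
      · rw [if_pos hdn, if_pos hdn]
        obtain ⟨c, rfl⟩ := hdn
        rw [Nat.mul_div_cancel_left _ (Nat.pos_of_ne_zero (NeZero.ne d))]
        push_cast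
        rw [map_mul]; ring
      · rw [if_neg hdn, if_neg hdn]; simp
    rw [hS]
    simp_rw [Finset.sum_mul, h1, ← Finset.mul_sum]
    congr 1
    simp_rw [Finset.sum_comm (s := Finset.range h) (t := Finset.range (f * d)), ← Finset.mul_sum]
    refine Finset.sum_congr rfl fun k _ => ?_
    congr 1
    rw [hE, pow_two]
    simp only
    rw [Finset.sum_mul_sum, Finset.mul_sum]
    refine Finset.sum_congr rfl fun a _ => ?_
    rw [Finset.mul_sum]
    refine Finset.sum_congr rfl fun b _ => ?_
    rw [← AddChar.map_add_eq_mul, ← AddChar.map_add_eq_mul]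
    congr 1
    push_cast; ring
  have hbound : ‖S‖ * (d * Real.sqrt f) ≤ (f * d : ℕ) * h := by
    have h0 : ‖S * (d * τ)‖ = ‖S‖ * (d * Real.sqrt f) := by
      rw [norm_mul, norm_mul, hτn]; simp
    rw [← h0, key, norm_mul]
    have h2 : ‖∑ k ∈ Finset.range (f * d), ψ⁻¹ (k : ZMod f) * (e k * E k ^ 2)‖ ≤ (f * d : ℕ) * h := by
      refine le_trans ?_ (parseval_bound (N := f * d) h)
      rw [Finset.sum_filter]
      refine (norm_sum_le _ _).trans (Finset.sum_le_sum fun k _ => ?_)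
      by_cases hk : k = 0
      · subst hk
        have h00 : ψ⁻¹ ((0 : ℕ) : ZMod f) = 0 := by
          rw [Nat.cast_zero]; exact DirichletCharacter.map_zero' _ hf
        rw [h00]; simp
      · rw [if_pos hk, norm_mul, norm_mul, norm_pow, he, AddChar.norm_apply, one_mul]
        exact mul_le_of_le_one_left (by positivity) (DirichletCharacter.norm_le_one _ _)
    calc _ ≤ 1 * ‖∑ k ∈ Finset.range (f * d), ψ⁻¹ (k : ZMod f) * (e k * E k ^ 2)‖ := by
          gcongr; exact DirichletCharacter.norm_le_one _ _
      _ ≤ _ := by rw [one_mul]; exact h2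
  have hfp : (0:ℝ) < Real.sqrt f := Real.sqrt_pos.2 (by exact_mod_cast Nat.pos_of_ne_zero (NeZero.ne f))
  have hdp : (0:ℝ) < d := by exact_mod_cast Nat.pos_of_ne_zero (NeZero.ne d)
  have hsq : Real.sqrt f * Real.sqrt f = f := Real.mul_self_sqrt (Nat.cast_nonneg f)
  have : ‖S‖ * (d * Real.sqrt f) ≤ (h * Real.sqrt f) * (d * Real.sqrt f) := by
    refine hbound.trans (le_of_eq ?_)
    push_cast
    calc (f:ℝ) * d * h = (Real.sqrt f * Real.sqrt f) * d * h := by rw [hsq]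
      _ = _ := by ring
  exact le_of_mul_le_mul_right this (by positivity)


lemma sieved_pv {f : ℕ} [NeZero f] {ψ : DirichletCharacter ℂ f}
    (hψ : ψ.IsPrimitive) (hf : f ≠ 1) (h : ℕ) (P : Finset ℕ) :
    ∀ (_ : ∀ p ∈ P, p.Prime) (d : ℕ) (_ : d ≠ 0) (_ : ∀ p ∈ P, ¬ p ∣ d),
    ‖∑ a ∈ Finset.range h, ∑ b ∈ Finset.range h,
      (if d ∣ (a + b + 1) ∧ ∀ p ∈ P, ¬ p ∣ (a + b + 1)
        then ψ ((a + b + 1 : ℕ) : ZMod f) else 0)‖ ≤ 2 ^ P.card * (h * Real.sqrt f) := by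
  induction P using Finset.induction_on with
  | empty =>
    intro _ d hd _
    haveI : NeZero d := ⟨hd⟩
    simpa using smoothed_pv (d := d) hψ hf h
  | insert p P hp ih =>
    intro hP d hd hPd
    have hpp : p.Prime := hP p (by simp)
    have hP' : ∀ q ∈ P, q.Prime := fun q hq => hP q (by simp [hq])
    have i1 := ih hP' d hd (fun q hq => hPd q (by simp [hq]))
    have i2 := ih hP' (d * p) (mul_ne_zero hd hpp.ne_zero) (fun q hq hdvd => by
      rcases ((hP' q hq).dvd_mul).1 hdvd with h1 | h1
      · exact hPd q (by simp [hq]) h1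
      · rw [(Nat.prime_dvd_prime_iff_eq (hP' q hq) hpp).1 h1] at hq
        exact hp hq)
    have hcop : Nat.Coprime d p :=
      ((Nat.Prime.coprime_iff_not_dvd hpp).2 (hPd p (by simp))).symm
    have e : ∀ n : ℕ, (if d ∣ n ∧ ∀ q ∈ insert p P, ¬ q ∣ n then ψ (n : ZMod f) else 0)
        = (if d ∣ n ∧ ∀ q ∈ P, ¬ q ∣ n then ψ (n : ZMod f) else 0)
          - (if d * p ∣ n ∧ ∀ q ∈ P, ¬ q ∣ n then ψ (n : ZMod f) else 0) := by
      intro n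
      have hiff : d * p ∣ n ↔ d ∣ n ∧ p ∣ n :=
        ⟨fun h => ⟨(dvd_mul_right _ _).trans h, (dvd_mul_left _ _).trans h⟩,
          fun h => hcop.mul_dvd_of_dvd_of_dvd h.1 h.2⟩
      simp only [hiff, Finset.forall_mem_insert]
      by_cases h1 : d ∣ n <;> by_cases h2 : p ∣ n <;> by_cases h3 : ∀ q ∈ P, ¬ q ∣ n <;>
        simp [h1, h2, h3]
    simp_rw [e, Finset.sum_sub_distrib]
    refine (norm_sub_le _ _).trans ((add_le_add i1 i2).trans (le_of_eq ?_))
    rw [Finset.card_insert_of_notMem hp, pow_succ]; ring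

open Classical in
lemma sieve_count (P : Finset ℕ) :
    ∀ (_ : ∀ p ∈ P, p.Prime) (x y : ℝ) (_ : x ≤ y),
    |(((Finset.Ioc ⌊x⌋ ⌊y⌋).filter (fun n : ℤ => ∀ p ∈ P, ¬ (p : ℤ) ∣ n)).card : ℝ)
      - (y - x) * ∏ p ∈ P, (1 - 1 / (p : ℝ))| ≤ 2 ^ P.card := by
  induction P using Finset.induction_on with
  | empty =>
    intro _ x y hxy
    simp only [Finset.notMem_empty, false_imp_iff, implies_true, Finset.filter_true,
      Int.card_Ioc, Finset.prod_empty, mul_one, Finset.card_empty, pow_zero]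
    have h1 : ⌊x⌋ ≤ ⌊y⌋ := Int.floor_le_floor hxy
    have h2 : (((⌊y⌋ - ⌊x⌋).toNat : ℕ) : ℝ) = (⌊y⌋ : ℝ) - ⌊x⌋ := by
      have : (((⌊y⌋ - ⌊x⌋).toNat : ℕ) : ℤ) = ⌊y⌋ - ⌊x⌋ := Int.toNat_of_nonneg (by omega)
      exact_mod_cast congrArg (Int.cast (R := ℝ)) this
    rw [h2, abs_le]
    have := Int.floor_le x
    have := Int.floor_le y
    have := Int.lt_floor_add_one x
    have := Int.lt_floor_add_one y
    constructor <;> linarith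
  | insert p P hp ih =>
    intro hP x y hxy
    have hpp : p.Prime := hP p (by simp)
    have hP' : ∀ q ∈ P, q.Prime := fun q hq => hP q (by simp [hq])
    have hp0 : (0:ℝ) < p := by exact_mod_cast hpp.pos
    have i1 := ih hP' x y hxy
    have i2 := ih hP' (x / p) (y / p) (by gcongr)
    set A := (Finset.Ioc ⌊x⌋ ⌊y⌋).filter (fun n : ℤ => ∀ q ∈ P, ¬ (q : ℤ) ∣ n)
    set B := (Finset.Ioc ⌊x / p⌋ ⌊y / p⌋).filter (fun n : ℤ => ∀ q ∈ P, ¬ (q : ℤ) ∣ n) with hB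
    have hc : (A.filter (fun n : ℤ => (p : ℤ) ∣ n)).card = B.card := by
      symm
      refine Finset.card_bij (fun n _ => (p : ℤ) * n) ?_ ?_ ?_
      · intro n hn
        simp only [A, hB, Finset.mem_filter, Finset.mem_Ioc, Int.floor_lt, Int.le_floor] at hn ⊢
        obtain ⟨⟨h1, h2⟩, h3⟩ := hn
        rw [div_lt_iff₀ hp0] at h1
        rw [le_div_iff₀ hp0] at h2
        refine ⟨⟨⟨by push_cast; linarith, by push_cast; linarith⟩, ?_⟩, dvd_mul_right _ _⟩
        intro q hq hdvd
        have hqi : Prime (q : ℤ) := Nat.prime_iff_prime_int.1 (hP' q hq)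
        rcases hqi.dvd_or_dvd hdvd with h4 | h4
        · have : q ∣ p := by exact_mod_cast h4
          rw [(Nat.prime_dvd_prime_iff_eq (hP' q hq) hpp).1 this] at hq
          exact hp hq
        · exact h3 q hq h4
      · intro a _ b _ hab
        have : (p : ℤ) ≠ 0 := by exact_mod_cast hpp.ne_zero
        exact mul_left_cancel₀ this hab
      · intro n hn
        simp only [A, hB, Finset.mem_filter, Finset.mem_Ioc, Int.floor_lt, Int.le_floor] at hn ⊢
        obtain ⟨⟨⟨h1, h2⟩, h3⟩, c, rfl⟩ := hn
        push_cast at h1 h2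
        refine ⟨c, ⟨⟨?_, ?_⟩, fun q hq hd => h3 q hq (hd.mul_left _)⟩, rfl⟩
        · rw [div_lt_iff₀ hp0]; linarith
        · rw [le_div_iff₀ hp0]; linarith
    have hsplit : ((Finset.Ioc ⌊x⌋ ⌊y⌋).filter (fun n : ℤ => ∀ q ∈ insert p P, ¬ (q : ℤ) ∣ n))
        = A.filter (fun n : ℤ => ¬ (p : ℤ) ∣ n) := by
      ext n
      simp only [A, Finset.mem_filter, Finset.forall_mem_insert]
      tauto
    have hcard := Finset.card_filter_add_card_filter_not (s := A) (fun n : ℤ => (p : ℤ) ∣ n)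
    rw [hc] at hcard
    have hcard' : (B.card : ℝ) + ((A.filter (fun n : ℤ => ¬ (p : ℤ) ∣ n)).card : ℝ) = A.card := by
      exact_mod_cast hcard
    rw [hsplit, Finset.prod_insert hp, Finset.card_insert_of_notMem hp, pow_succ]
    set W := ∏ p ∈ P, (1 - 1 / (p : ℝ))
    have e2 : (y / p - x / p) * W = (y - x) * W * (1 / p) := by ring
    rw [e2] at i2
    rw [abs_le] at *
    have e3 : (y - x) * ((1 - 1 / (p:ℝ)) * W) = (y - x) * W - (y - x) * W * (1 / p) := by ring
    rw [e3]
    constructor <;> linarith [i1.1, i1.2, i2.1, i2.2]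

lemma odd_card_bound (S : Finset ℕ) (a : ℕ) (ha : Odd a) (ha' : 17 ≤ a)
    (hS : ∀ x ∈ S, Odd x ∧ 17 ≤ x ∧ x < a) : 17 + 2 * S.card ≤ a := by
  have : S.card ≤ (Finset.range ((a - 17) / 2)).card := by
    refine Finset.card_le_card_of_injOn (fun x => (x - 17) / 2) ?_ ?_
    · intro x hx
      obtain ⟨⟨u, hu⟩, h2, h3⟩ := hS x hx
      obtain ⟨v, hv⟩ := ha
      simp only [Finset.coe_range, Set.mem_Iio]
      omega
    · intro x hx y hy hxy
      obtain ⟨⟨u, hu⟩, h2, h3⟩ := hS x hx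
      obtain ⟨⟨v, hv⟩, h4, h5⟩ := hS y hy
      simp only at hxy
      omega
  rw [Finset.card_range] at this
  omega

lemma prod_large (S : Finset ℕ) :
    (∀ x ∈ S, Odd x ∧ 17 ≤ x) → 15 / (15 + 2 * (S.card : ℝ)) ≤ (∏ p ∈ S, (1 - 1 / (p : ℝ))) ^ 2 := by
  induction S using Finset.induction_on_max with
  | empty => intro _; simp
  | insert a S hmax ih =>
    intro hS
    have hnot : a ∉ S := fun h => lt_irrefl _ (hmax a h)
    have i := ih (fun x hx => hS x (by simp [hx]))
    have ha := hS a (by simp)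
    have hb := odd_card_bound S a ha.1 ha.2
      (fun x hx => ⟨(hS x (by simp [hx])).1, (hS x (by simp [hx])).2, hmax x hx⟩)
    rw [Finset.prod_insert hnot, Finset.card_insert_of_notMem hnot, mul_pow]
    have hb' : 17 + 2 * (S.card : ℝ) ≤ a := by exact_mod_cast hb
    have hc : (0:ℝ) ≤ S.card := Nat.cast_nonneg _
    have h1 : (15 + 2 * (S.card : ℝ)) / (17 + 2 * S.card) ≤ (1 - 1 / (a:ℝ)) ^ 2 := by
      have ha0 : (0:ℝ) < a := by linarith
      have e : (1 - 1 / (a:ℝ)) ^ 2 = (a - 1) ^ 2 / a ^ 2 := by field_simp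
      rw [e, div_le_div_iff₀ (by positivity) (by positivity)]
      nlinarith
    calc 15 / (15 + 2 * ((S.card + 1 : ℕ) : ℝ))
        = (15 + 2 * (S.card : ℝ)) / (17 + 2 * S.card) * (15 / (15 + 2 * (S.card : ℝ))) := by
          push_cast
          field_simp
          ring
      _ ≤ _ := mul_le_mul h1 i (by positivity) (by positivity)

lemma four_pow_card (P : Finset ℕ) (hP : ∀ p ∈ P, p.Prime) :
    3 * 4 ^ P.card ≤ 8 * ∏ p ∈ P, p := by
  have h5 : ∀ p ∈ P \ {2, 3}, 4 ≤ p := by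
    intro p hp
    simp only [Finset.mem_sdiff, Finset.mem_insert, Finset.mem_singleton, not_or] at hp
    have := (hP p hp.1).two_le
    omega
  have h1 : 4 ^ (P \ {2, 3}).card ≤ ∏ p ∈ P \ {2, 3}, p := Finset.pow_card_le_prod _ _ _ h5
  have h2 : 3 * 4 ^ (P ∩ {2, 3}).card ≤ 8 * ∏ p ∈ P ∩ {2, 3}, p := by
    by_cases a : 2 ∈ P <;> by_cases b : 3 ∈ P
    · have : P ∩ {2, 3} = {2, 3} := by ext x; simp; grind
      rw [this]; decide
    · have : P ∩ {2, 3} = {2} := by ext x; simp; grind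
      rw [this]; decide
    · have : P ∩ {2, 3} = {3} := by ext x; simp; grind
      rw [this]; decide
    · have : P ∩ {2, 3} = ∅ := by ext x; simp; grind
      rw [this]; decide
  rw [← Finset.card_inter_add_card_sdiff P {2, 3}, ← Finset.prod_inter_mul_prod_sdiff P {2, 3}, pow_add]
  calc 3 * (4 ^ (P ∩ {2, 3}).card * 4 ^ (P \ {2, 3}).card)
      = (3 * 4 ^ (P ∩ {2, 3}).card) * 4 ^ (P \ {2, 3}).card := by ring
    _ ≤ (8 * ∏ p ∈ P ∩ {2, 3}, p) * ∏ p ∈ P \ {2, 3}, p := Nat.mul_le_mul h2 h1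
    _ = _ := by ring

lemma small_primes (P : Finset ℕ) (hP : ∀ p ∈ P, p.Prime) :
    P.filter (fun p => p < 17) ⊆ {2, 3, 5, 7, 11, 13} := by
  intro p hp
  rw [Finset.mem_filter] at hp
  obtain ⟨h1, h2⟩ := hp
  have := hP p h1
  interval_cases p <;> first | decide | (exfalso; revert this; norm_num)

lemma phi_lower (P : Finset ℕ) (hP : ∀ p ∈ P, p.Prime) (j : ℕ)
    (hj : (P.filter (fun p => ¬ p < 17)).card ≤ j) :
    (0.1918 : ℝ) ^ 2 * (15 / (15 + 2 * (j : ℝ))) ≤ (∏ p ∈ P, (1 - 1 / (p : ℝ))) ^ 2 := by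
  rw [← Finset.prod_filter_mul_prod_filter_not P (fun p => p < 17), mul_pow]
  have h1 : (0.1918 : ℝ) ≤ ∏ p ∈ P.filter (fun p => p < 17), (1 - 1 / (p : ℝ)) := by
    calc (0.1918 : ℝ) ≤ ∏ p ∈ ({2, 3, 5, 7, 11, 13} : Finset ℕ), (1 - 1 / (p : ℝ)) := by
          norm_num [Finset.prod_insert]
      _ ≤ _ := by
          have hnn : ∀ p ∈ ({2, 3, 5, 7, 11, 13} : Finset ℕ), 0 ≤ 1 - 1 / (p : ℝ) := by
            intro p hp
            have : (1:ℝ) ≤ p := by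
              have : 1 ≤ p := by
                simp at hp; omega
              exact_mod_cast this
            have : 1 / (p:ℝ) ≤ 1 := by rw [div_le_one (by linarith)]; exact this
            linarith
          rw [← Finset.prod_sdiff (small_primes P hP)]
          refine mul_le_of_le_one_left
            (Finset.prod_nonneg fun p hp => hnn p (small_primes P hP hp)) ?_
          refine Finset.prod_le_one (fun p hp => hnn p (Finset.mem_sdiff.1 hp).1) ?_
          intro p _
          have : 0 ≤ 1 / (p:ℝ) := by positivity
          linarith
  have h2 := prod_large (P.filter (fun p => ¬ p < 17)) (by
    intro p hp
    rw [Finset.mem_filter] at hp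
    exact ⟨(hP p hp.1).odd_of_ne_two (by omega), by omega⟩)
  have h3 : 15 / (15 + 2 * (j : ℝ)) ≤ 15 / (15 + 2 * ((P.filter (fun p => ¬ p < 17)).card : ℝ)) := by
    have : ((P.filter (fun p => ¬ p < 17)).card : ℝ) ≤ j := by exact_mod_cast hj
    gcongr
  exact mul_le_mul (by gcongr) (h3.trans h2) (by positivity) (by positivity)


open Classical in
lemma inner_count (P : Finset ℕ) (hP : ∀ p ∈ P, p.Prime) (a h : ℕ) :
    (h : ℝ) * ∏ p ∈ P, (1 - 1 / (p : ℝ)) - 2 ^ P.card ≤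
      ∑ b ∈ Finset.range h, (if ∀ p ∈ P, ¬ p ∣ (a + b + 1) then (1 : ℝ) else 0) := by
  have h1 := sieve_count P hP (a : ℝ) ((a + h : ℕ) : ℝ) (by push_cast; linarith [(Nat.cast_nonneg h : (0:ℝ) ≤ h)])
  rw [Int.floor_natCast, Int.floor_natCast] at h1
  have h2 : ((Finset.Ioc (a : ℤ) ((a + h : ℕ) : ℤ)).filter (fun n : ℤ => ∀ p ∈ P, ¬ (p : ℤ) ∣ n)).card
      = ((Finset.range h).filter (fun b => ∀ p ∈ P, ¬ p ∣ (a + b + 1))).card := by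
    symm
    refine Finset.card_bij (fun b _ => ((a + b + 1 : ℕ) : ℤ)) ?_ ?_ ?_
    · intro b hb
      simp only [Finset.mem_filter, Finset.mem_range, Finset.mem_Ioc] at hb ⊢
      refine ⟨⟨by omega, by omega⟩, fun p hp hd => hb.2 p hp (by exact_mod_cast hd)⟩
    · intro b _ c _ h
      omega
    · intro n hn
      simp only [Finset.mem_filter, Finset.mem_range, Finset.mem_Ioc] at hn ⊢
      refine ⟨(n - a - 1).toNat, ⟨by omega, fun p hp hd => hn.2 p hp ?_⟩, by omega⟩
      have : ((a + (n - a - 1).toNat + 1 : ℕ) : ℤ) = n := by omega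
      rw [← this]
      exact_mod_cast hd
  rw [h2, abs_le] at h1
  rw [← Finset.sum_filter, Finset.sum_const, nsmul_eq_mul, mul_one]
  have := h1.1
  push_cast at this
  have e : ((a:ℝ) + h - a) = h := by ring
  rw [e] at this
  linarith

lemma final_numeric (m f c j k h : ℕ) (Φ : ℝ) (hm : 10 ^ 15 ≤ m) (hΦ : 0 < Φ) (hΦ1 : Φ ≤ 1)
    (hΦ2 : (0.1918 : ℝ) ^ 2 * (15 / (15 + 2 * ((j + 1 : ℕ) : ℝ))) ≤ Φ ^ 2)
    (hj : 17 ^ j ≤ m) (hk : k ≤ 7 + j) (hc : 3 * (4 ^ c * f) ≤ 8 * m)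
    (hh : Real.sqrt m * Real.log m - 1 ≤ h) :
    2 ^ (c + 1) * Real.sqrt f < h * Φ - 2 ^ k := by
  set L := Real.log m with hL
  set s := Real.sqrt m with hs
  have hm' : (10:ℝ) ^ 15 ≤ m := by exact_mod_cast hm
  have hm0 : (0:ℝ) < m := by linarith [show (0:ℝ) < 10 ^ 15 by norm_num]
  have hs2 : s ^ 2 = m := Real.sq_sqrt hm0.le
  have hs0 : 0 < s := Real.sqrt_pos.2 hm0
  set t := Real.sqrt s with ht
  have ht2 : t ^ 2 = s := Real.sq_sqrt hs0.le
  have ht0 : 0 < t := Real.sqrt_pos.2 hs0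
  have ht4 : t ^ 4 = m := by rw [← hs2, ← ht2]; ring
  have ht5 : 5600 ≤ t := by
    by_contra hcon
    push Not at hcon
    have : t ^ 4 < 5600 ^ 4 := by gcongr
    rw [ht4] at this
    norm_num at this hm'
    linarith
  have hL1 : (33.9 : ℝ) ≤ L := by
    have h1 : Real.log ((2:ℝ) ^ 49) ≤ L := Real.log_le_log (by positivity) (by norm_num at hm' ⊢; linarith)
    rw [Real.log_pow] at h1
    have := Real.log_two_gt_d9
    push_cast at h1
    linarith
  have hLj : 2.77 * (j : ℝ) ≤ L := by
    have hj' : (17:ℝ) ^ j ≤ m := by exact_mod_cast hj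
    have h0 : (2:ℝ) ^ (4 * j) ≤ m := by
      rw [pow_mul]; exact le_trans (by gcongr; norm_num) hj'
    have h1 : Real.log ((2:ℝ) ^ (4 * j)) ≤ L := Real.log_le_log (by positivity) h0
    rw [Real.log_pow] at h1
    have := Real.log_two_gt_d9
    push_cast at h1
    nlinarith [(Nat.cast_nonneg j : (0:ℝ) ≤ j)]
  -- main inequality
  have hmain : 3.4 ≤ Φ * L := by
    have hj0 : (0:ℝ) ≤ j := Nat.cast_nonneg j
    have h1 : (3.4 : ℝ) ^ 2 ≤ (Φ * L) ^ 2 := by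
      rw [mul_pow]
      have h2 : (3.4:ℝ) ^ 2 ≤ (0.1918 : ℝ) ^ 2 * (15 / (15 + 2 * ((j + 1 : ℕ) : ℝ))) * L ^ 2 := by
        push_cast
        rw [mul_div_assoc', div_mul_eq_mul_div, le_div_iff₀ (by positivity)]
        nlinarith
      exact h2.trans (by gcongr)
    exact le_of_sq_le_sq h1 (by positivity)
  have hk2 : (2:ℝ) ^ k ≤ 128 * t := by
    have h1 : (2:ℝ) ^ k ≤ 2 ^ (7 + j) := pow_le_pow_right₀ (by norm_num) hk
    have h2 : (2:ℝ) ^ j ≤ t := by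
      have hj' : (17:ℝ) ^ j ≤ m := by exact_mod_cast hj
      have : ((2:ℝ) ^ j) ^ 4 ≤ t ^ 4 := by
        rw [ht4, ← pow_mul, mul_comm, pow_mul]
        exact le_trans (by gcongr; norm_num) hj'
      exact le_of_pow_le_pow_left₀ (by norm_num) ht0.le this
    rw [pow_add] at h1
    linarith
  have hc2 : 2 ^ (c + 1) * Real.sqrt f ≤ 3.27 * s := by
    have hc' : 3 * ((4:ℝ) ^ c * f) ≤ 8 * m := by exact_mod_cast hc
    refine le_of_sq_le_sq ?_ (by positivity)
    rw [mul_pow, Real.sq_sqrt (Nat.cast_nonneg f), mul_pow, hs2, ← pow_mul, mul_comm (c+1), pow_mul,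
      pow_succ]
    norm_num
    linarith
  have hfin : 3.4 * s - 1 ≤ h * Φ := by
    have h1 : (s * L - 1) * Φ ≤ h * Φ := by gcongr
    have h2 : 3.4 * s ≤ Φ * L * s := by gcongr
    nlinarith
  have : 128 * t + 1 < 0.13 * s := by
    rw [← ht2]; nlinarith
  linarith


lemma chi_one_of_small (m : ℕ) (χ : DirichletCharacter ℂ m) (q₁ q₂ : ℕ)
    (hmin₂ : ∀ q : ℕ, q.Prime → χ (q : ZMod m) ∉ ({0, 1} : Set ℂ) → q ≠ q₁ → q₂ ≤ q)
    (n : ℕ) : n ≠ 0 → n < q₂ → (∀ p : ℕ, p.Prime → p ∣ n → ¬ p ∣ m ∧ p ≠ q₁) →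
    χ (n : ZMod m) = 1 := by
  induction n using Nat.recOnMul with
  | zero => intro h; exact absurd rfl h
  | one => intros; simp
  | prime p hp =>
    intro _ hlt hcop
    obtain ⟨h1, h2⟩ := hcop p hp dvd_rfl
    by_contra hne
    have hu : χ (p : ZMod m) ≠ 0 := by
      have : IsUnit (p : ZMod m) := (ZMod.isUnit_iff_coprime p m).2 ((Nat.Prime.coprime_iff_not_dvd hp).2 h1)
      exact (this.map χ).ne_zero
    have := hmin₂ p hp (by simp [hne, hu]) h2
    omega
  | mul a b iha ihb =>
    intro h0 hlt hcop
    have ha : a ≠ 0 := left_ne_zero_of_mul h0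
    have hb : b ≠ 0 := right_ne_zero_of_mul h0
    have h1 := iha ha (lt_of_le_of_lt (Nat.le_mul_of_pos_right a (Nat.pos_of_ne_zero hb)) hlt)
      (fun p hp hd => hcop p hp (hd.mul_right _))
    have h2 := ihb hb (lt_of_le_of_lt (Nat.le_mul_of_pos_left b (Nat.pos_of_ne_zero ha)) hlt)
      (fun p hp hd => hcop p hp (hd.mul_left _))
    push_cast
    rw [map_mul, h1, h2, one_mul]

theorem q2_weak_bound (m : ℕ) (hm : (10:ℕ)^15 ≤ m)
    (χ : DirichletCharacter ℂ m) (hχ : χ ≠ 1)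
    (q₁ q₂ : ℕ) (hq₁ : q₁.Prime) (hq₂ : q₂.Prime) (hlt : q₁ < q₂)
    (hnr₁ : χ (q₁ : ZMod m) ∉ ({0, 1} : Set ℂ))
    (hnr₂ : χ (q₂ : ZMod m) ∉ ({0, 1} : Set ℂ))
    (hmin₁ : ∀ q : ℕ, q.Prime → χ (q : ZMod m) ∉ ({0, 1} : Set ℂ) → q₁ ≤ q)
    (hmin₂ : ∀ q : ℕ, q.Prime → χ (q : ZMod m) ∉ ({0, 1} : Set ℂ) → q ≠ q₁ → q₂ ≤ q) :
    (q₂ : ℝ) < 2 * (m : ℝ) ^ ((1:ℝ)/2) * Real.log m := by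
  classical
  by_contra hcon
  push Not at hcon
  rw [← Real.sqrt_eq_rpow] at hcon
  have hm0 : m ≠ 0 := by
    have : (0:ℕ) < 10 ^ 15 := by norm_num
    omega
  have : NeZero m := ⟨hm0⟩
  set f := χ.conductor with hf
  have hfm : f ∣ m := χ.conductor_dvd_level
  have : NeZero f := ⟨χ.conductor_ne_zero⟩
  have hf1 : f ≠ 1 := fun h => hχ (χ.eq_one_iff_conductor_eq_one.2 h)
  set ψ := χ.primitiveCharacter with hψ
  have hprim : ψ.IsPrimitive := χ.primitiveCharacter_isPrimitive
  set R := m.primeFactors \ f.primeFactors with hR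
  set P' := insert q₁ R with hP'
  set P := insert q₁ m.primeFactors with hP
  have hRp : ∀ p ∈ R, p.Prime := fun p hp => Nat.prime_of_mem_primeFactors (Finset.mem_sdiff.1 hp).1
  have hPp : ∀ p ∈ P, p.Prime := by
    intro p hp
    rcases Finset.mem_insert.1 hp with rfl | h
    · exact hq₁
    · exact Nat.prime_of_mem_primeFactors h
  have hP'p : ∀ p ∈ P', p.Prime := by
    intro p hp
    rcases Finset.mem_insert.1 hp with rfl | h
    · exact hq₁
    · exact hRp p h
  set h := q₂ / 2 with hh
  set Φ := ∏ p ∈ P, (1 - 1 / (p : ℝ)) with hΦ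
  -- pointwise identity
  have hpt : ∀ n : ℕ, n ≠ 0 → n < q₂ →
      (if 1 ∣ n ∧ ∀ p ∈ P', ¬ p ∣ n then ψ (n : ZMod f) else 0)
        = (((if ∀ p ∈ P, ¬ p ∣ n then (1:ℝ) else 0) : ℝ) : ℂ) := by
    intro n hn0 hnq
    by_cases hc : ∀ p ∈ P, ¬ p ∣ n
    · have hc' : ∀ p ∈ P', ¬ p ∣ n := by
        intro p hp
        apply hc
        rcases Finset.mem_insert.1 hp with rfl | h
        · simp [hP]
        · exact Finset.mem_insert_of_mem (Finset.mem_sdiff.1 h).1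
      rw [if_pos ⟨one_dvd _, hc'⟩, if_pos hc]
      have hone := chi_one_of_small m χ q₁ q₂ hmin₂ n hn0 hnq (by
        intro p hp hd
        refine ⟨fun hpm => hc p ?_ hd, fun he => hc p ?_ hd⟩
        · exact Finset.mem_insert_of_mem (Nat.mem_primeFactors.2 ⟨hp, hpm, hm0⟩)
        · rw [he]; exact Finset.mem_insert_self _ _)
      have hcop : Nat.Coprime n m := Nat.Coprime.symm <| by
        refine Nat.coprime_of_dvd fun p hp hpm hpn => ?_
        exact hc p (Finset.mem_insert_of_mem (Nat.mem_primeFactors.2 ⟨hp, hpm, hm0⟩)) hpn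
      have := χ.primitiveCharacter_apply_of_isCoprime (a := (n : ℤ)) (Nat.isCoprime_iff_coprime.2 hcop)
      simp only [Int.cast_natCast] at this
      rw [hψ, this, hone]; simp
    · rw [if_neg hc]
      push Not at hc
      obtain ⟨p, hp, hpn⟩ := hc
      by_cases hpP : p ∈ P'
      · rw [if_neg (fun hh => hh.2 p hpP hpn)]; simp
      · have hpf : p ∣ f := by
          have h1 : p ∈ f.primeFactors := by
            by_contra h2
            apply hpP
            rcases Finset.mem_insert.1 hp with rfl | h
            · exact Finset.mem_insert_self _ _
            · exact Finset.mem_insert_of_mem (Finset.mem_sdiff.2 ⟨h, h2⟩)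
          exact Nat.dvd_of_mem_primeFactors h1
        have hz : ψ (n : ZMod f) = 0 := by
          apply MulChar.map_nonunit
          rw [ZMod.isUnit_iff_coprime]
          intro hco
          have := Nat.dvd_gcd hpn hpf
          rw [hco.gcd_eq_one] at this
          exact (hPp p hp).one_lt.ne' (Nat.dvd_one.1 this)
        rw [hz]; simp
  have hup := sieved_pv hprim hf1 h P' hP'p 1 one_ne_zero
    (fun p hp hd => (hP'p p hp).one_lt.ne' (Nat.dvd_one.1 hd))
  have hsum : (∑ a ∈ Finset.range h, ∑ b ∈ Finset.range h,
      (if 1 ∣ (a + b + 1) ∧ ∀ p ∈ P', ¬ p ∣ (a + b + 1)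
        then ψ ((a + b + 1 : ℕ) : ZMod f) else 0)) =
      ((∑ a ∈ Finset.range h, ∑ b ∈ Finset.range h,
        (if ∀ p ∈ P, ¬ p ∣ (a + b + 1) then (1:ℝ) else 0) : ℝ) : ℂ) := by
    rw [Complex.ofReal_sum]
    refine Finset.sum_congr rfl fun a ha => ?_
    rw [Complex.ofReal_sum]
    refine Finset.sum_congr rfl fun b hb => ?_
    rw [Finset.mem_range] at ha hb
    exact hpt (a + b + 1) (by omega) (by omega)
  rw [hsum, Complex.norm_real] at hup
  have hup2 := (le_abs_self _).trans hup
  have hlow : (h : ℝ) * (h * Φ - 2 ^ P.card) ≤ ∑ a ∈ Finset.range h, ∑ b ∈ Finset.range h,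
        (if ∀ p ∈ P, ¬ p ∣ (a + b + 1) then (1:ℝ) else 0) := by
    have := Finset.card_nsmul_le_sum (Finset.range h) (fun a => ∑ b ∈ Finset.range h,
        (if ∀ p ∈ P, ¬ p ∣ (a + b + 1) then (1:ℝ) else 0)) ((h:ℝ) * Φ - 2 ^ P.card)
        (fun a _ => by convert inner_count P hPp a h)
    simpa using this
  have hcardP' : P'.card ≤ R.card + 1 := Finset.card_insert_le _ _
  -- large primes
  set J := (m.primeFactors.filter (fun p => ¬ p < 17)).card with hJ
  have hJP : (P.filter (fun p => ¬ p < 17)).card ≤ J + 1 := by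
    rw [hP, Finset.filter_insert]
    split_ifs
    · omega
    · exact Finset.card_insert_le _ _
  have hphi := phi_lower P hPp (J + 1) hJP
  have hΦpos : 0 < Φ := Finset.prod_pos fun p hp => by
    have h2 : (2:ℝ) ≤ p := by exact_mod_cast (hPp p hp).two_le
    have : 1 / (p:ℝ) < 1 := by rw [div_lt_one (by linarith)]; linarith
    linarith
  have hΦ1 : Φ ≤ 1 := Finset.prod_le_one (fun p hp => by
    have h2 : (2:ℝ) ≤ p := by exact_mod_cast (hPp p hp).two_le
    have : 1 / (p:ℝ) < 1 := by rw [div_lt_one (by linarith)]; linarith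
    linarith) (fun p _ => by
      have : 0 ≤ 1 / (p:ℝ) := by positivity
      linarith)
  have hJm : 17 ^ J ≤ m := by
    calc 17 ^ J ≤ ∏ p ∈ m.primeFactors.filter (fun p => ¬ p < 17), p :=
          Finset.pow_card_le_prod _ _ _ (fun p hp => by
            have := (Finset.mem_filter.1 hp).2; omega)
      _ ≤ m := Nat.le_of_dvd (Nat.pos_of_ne_zero hm0)
          ((Finset.prod_dvd_prod_of_subset _ _ _ (Finset.filter_subset _ _)).trans
            (Nat.prod_primeFactors_dvd m))
  have hkJ : P.card ≤ 7 + J := by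
    have h1 : P.card ≤ m.primeFactors.card + 1 := Finset.card_insert_le _ _
    have h2 := Finset.card_filter_add_card_filter_not (s := m.primeFactors) (fun p => p < 17)
    have h3 := Finset.card_le_card (small_primes m.primeFactors
      (fun p hp => Nat.prime_of_mem_primeFactors hp))
    have h4 : ({2, 3, 5, 7, 11, 13} : Finset ℕ).card = 6 := by decide
    omega
  have hcR : 3 * (4 ^ R.card * f) ≤ 8 * m := by
    have h1 := four_pow_card R hRp
    have h2 : (∏ p ∈ R, p) * f ≤ m := by
      refine Nat.le_of_dvd (Nat.pos_of_ne_zero hm0) (Nat.Coprime.mul_dvd_of_dvd_of_dvd ?_ ?_ hfm)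
      · refine Nat.Coprime.prod_left fun p hp => ?_
        rw [Nat.Prime.coprime_iff_not_dvd (hRp p hp)]
        intro hpf
        exact (Finset.mem_sdiff.1 hp).2 (Nat.mem_primeFactors.2 ⟨hRp p hp, hpf, NeZero.ne f⟩)
      · exact (Finset.prod_dvd_prod_of_subset _ _ _ Finset.sdiff_subset).trans
          (Nat.prod_primeFactors_dvd m)
    nlinarith
  have hhb : Real.sqrt m * Real.log m - 1 ≤ h := by
    have : q₂ ≤ 2 * h + 1 := by omega
    have : (q₂ : ℝ) ≤ 2 * h + 1 := by exact_mod_cast this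
    linarith
  have hfin := final_numeric m f R.card J P.card h Φ hm hΦpos hΦ1 hphi hJm hkJ hcR hhb
  have hhpos : (0:ℝ) < h := by
    have : 0 < h := by have := hq₁.two_le; omega
    exact_mod_cast this
  have hA : (2:ℝ) ^ P'.card * (h * Real.sqrt f) ≤ 2 ^ (R.card + 1) * (h * Real.sqrt f) := by
    gcongr
    norm_num
  have hB : (h:ℝ) * (2 ^ (R.card + 1) * Real.sqrt f) < h * (h * Φ - 2 ^ P.card) := by gcongr
  have hC : (2:ℝ) ^ (R.card + 1) * (h * Real.sqrt f) = h * (2 ^ (R.card + 1) * Real.sqrt f) := by ring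
  linarith
end
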